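/- Let R be a commutative Noetherian ring, 𝔞 an ideal of R, and M an R-module with dim_R M ≤ 2. Then M is 𝔞-cofinite if and only if Supp_R M ⊆ V(𝔞) and the R-module Ext^i_R(R/𝔞, M) is finitely generated for i = 0, 1, 2. -/

import Mathlib

open CategoryTheory

universe u

/-- The `R`-module `Ext^i_R(N, M)` for two `R`-modules (objects of `ModuleCat R`). -/
noncomputable def extObj {R : Type u} [CommRing R] (N M : ModuleCat.{u} R) (i : ℕ) :
    ModuleCat.{u} R :=
  ((Ext R (ModuleCat.{u} R) i).obj (Opposite.op N)).obj M

/-- The `R`-module `Ext^i_R(R/𝔞, M)`. -/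
noncomputable def extIdeal {R : Type u} [CommRing R] (𝔞 : Ideal R) (i : ℕ)
    (M : ModuleCat.{u} R) : ModuleCat.{u} R :=
  extObj (ModuleCat.of R (R ⧸ 𝔞)) M i

/-- An `R`-module `M` is `𝔞`-cofinite if `Supp_R M ⊆ V(𝔞)` and `Ext^i_R(R/𝔞, M)` is a finitely
generated `R`-module for every `i ≥ 0`. -/
def IsCofinite {R : Type u} [CommRing R] (𝔞 : Ideal R) (M : ModuleCat.{u} R) : Prop :=
  Module.support R M ⊆ PrimeSpectrum.zeroLocus (𝔞 : Set R) ∧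
    ∀ i : ℕ, Module.Finite R (extIdeal 𝔞 i M)

/-- The Krull dimension `dim_R M` of an `R`-module `M`: the Krull dimension of its support,
i.e. the supremum of `dim R/𝔭` over primes `𝔭` in the support of `M`. -/
noncomputable def moduleDim (R : Type u) [CommRing R] (M : Type u) [AddCommGroup M]
    [Module R M] : WithBot ℕ∞ :=
  Order.krullDim (Module.support R M)

/-- An `R`-module `M` is in `FD_{≤n}` if there is a finitely generated submodule `N ⊆ M`
with `dim_R (M/N) ≤ n`. -/
def MemFD (R : Type u) [CommRing R] (n : ℕ) (M : Type u) [AddCommGroup M] [Module R M] : Prop :=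
  ∃ N : Submodule R M, N.FG ∧ moduleDim R (M ⧸ N) ≤ (n : WithBot ℕ∞)

/-- An `R`-module `M` is `𝔞`-torsion if every element is annihilated by some power of `𝔞`. -/
def IsTorsionIdeal {R : Type u} [CommRing R] (𝔞 : Ideal R) (M : Type u) [AddCommGroup M]
    [Module R M] : Prop :=
  ∀ m : M, ∃ n : ℕ, ∀ a ∈ 𝔞 ^ n, a • m = 0

/-- The arithmetic rank of an ideal `𝔞`: the least `n` such that there exist `a₁, …, aₙ ∈ R`
with `Rad (a₁, …, aₙ) = Rad 𝔞`. -/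
noncomputable def arithRank {R : Type u} [CommRing R] (𝔞 : Ideal R) : ℕ :=
  sInf {n : ℕ | ∃ f : Fin n → R, (Ideal.span (Set.range f)).radical = 𝔞.radical}

namespace CategoryTheory.ProjectiveResolution

open CochainComplex.HomComplex in
lemma extMk_zero_eq_zero {C : Type*} [Category* C] [Abelian C] [HasExt C] {X Y : C}
    (P : ProjectiveResolution X) (f : P.complex.X 0 ⟶ Y) (hf : P.complex.d 1 0 ≫ f = 0)
    (h : P.extMk f 1 rfl hf = 0) : f = 0 := by
  rw [← P.extEquivCohomologyClass.apply_eq_iff_eq, extEquivCohomologyClass_extMk,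
    extEquivCohomologyClass_zero, CohomologyClass.mk_eq_zero_iff,
    Cocycle.toSingleMk_mem_coboundaries_iff _ _ _ _ _ (1 : ℤ) (by simp)] at h
  obtain ⟨g, hg⟩ := h
  have h0 : P.cochainComplex.d (-(0 : ℕ)) 1 = 0 := by
    apply Limits.IsZero.eq_of_tgt
    exact P.cochainComplex.isZero_of_isStrictlyLE 0 1 (by simp)
  rw [h0, Limits.zero_comp] at hg
  rw [← cancel_epi (P.cochainComplexXIso (-(0 : ℕ)) 0 rfl).hom, ← hg, Limits.comp_zero]

end CategoryTheory.ProjectiveResolution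

section
variable {R : Type u} [CommRing R]

open Abelian in
/-- The two definitions of `Ext` agree. -/
theorem nonempty_ext_linearEquiv (N M : ModuleCat.{u} R) (n : ℕ) :
    Nonempty (((_root_.Ext R (ModuleCat.{u} R) n).obj (Opposite.op N)).obj M ≃ₗ[R]
      Abelian.Ext N M n) := by
  let P := projectiveResolution N
  let K := P.complex.linearYonedaObj R M
  obtain ⟨i, hi⟩ : ∃ i, (ComplexShape.up ℕ).prev n = i := ⟨_, rfl⟩
  let S := K.sc' i n (n + 1)
  have e : ((_root_.Ext R (ModuleCat.{u} R) n).obj (Opposite.op N)).obj M ≅ S.homology :=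
    P.isoExt n M ≪≫ K.homologyIsoSc' i n (n + 1) hi (by simp)
  let ψ : LinearMap.ker S.g.hom →ₗ[R] Abelian.Ext N M n :=
    { toFun f := P.extMk (f.1 : P.complex.X n ⟶ M) (n + 1) rfl f.2
      map_add' f g := (P.add_extMk ..).symm
      map_smul' r f := by
        rw [RingHom.id_apply, Ext.smul_eq_comp_mk₀]
        refine Eq.trans ?_ (P.extMk_comp_mk₀ (f.1 : P.complex.X n ⟶ M) (n + 1) rfl f.2 _).symm
        congr 1 }
  have hψ : Function.Surjective ψ := fun α ↦ by
    obtain ⟨f, hf, h⟩ := P.extMk_surjective α (n + 1) rfl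
    exact ⟨⟨f, hf⟩, h⟩
  have hker : LinearMap.ker ψ = LinearMap.range S.moduleCatToCycles := by
    ext ⟨f, hf⟩
    change P.extMk (f : P.complex.X n ⟶ M) (n + 1) rfl hf = 0 ↔ _
    cases n with
    | zero =>
      constructor
      · intro h
        refine ⟨0, ?_⟩
        rw [map_zero]
        exact Subtype.ext (P.extMk_zero_eq_zero _ _ h).symm
      · rintro ⟨g, hg⟩
        have : K.d i 0 = 0 := K.shape _ _ (by simp)
        have h0 : f = 0 := by
          refine (congrArg Subtype.val hg).symm.trans ?_
          change (K.d i 0).hom g = 0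
          rw [this]; rfl
        subst h0
        exact P.extMk_zero _ _
    | succ p =>
      have : i = p := by rw [← hi]; simp
      subst this
      refine (P.extMk_eq_zero_iff f _ _ hf i rfl).trans ?_
      constructor
      · rintro ⟨g, hg⟩
        exact ⟨g, Subtype.ext hg⟩
      · rintro ⟨g, hg⟩
        exact ⟨g, congrArg Subtype.val hg⟩
  exact ⟨(e ≪≫ S.moduleCatHomologyIso).toLinearEquiv.trans
    ((Submodule.quotEquivOfEq _ _ hker.symm).trans (ψ.quotKerEquivOfSurjective hψ))⟩
end

section
open Abelian

variable {R : Type u} [CommRing R] (𝔞 : Ideal R)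

/-- The module `Ext^i_R(R/𝔞, X)`, as a functor of unbundled modules. -/
abbrev ExtQuot (i : ℕ) (X : Type u) [AddCommGroup X] [Module R X] : Type u :=
  Abelian.Ext.{u} (ModuleCat.of R (R ⧸ 𝔞)) (ModuleCat.of R X) i

namespace ExtQuot

variable {X Y Z : Type u} [AddCommGroup X] [Module R X] [AddCommGroup Y] [Module R Y]
  [AddCommGroup Z] [Module R Z]

/-- Functoriality of `Ext^i_R(R/𝔞, -)`. -/
noncomputable def map (i : ℕ) (f : X →ₗ[R] Y) : ExtQuot 𝔞 i X →ₗ[R] ExtQuot 𝔞 i Y :=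
  (Ext.mk₀ (ModuleCat.ofHom f)).postcompOfLinear R (ModuleCat.of R (R ⧸ 𝔞)) (add_zero i)

lemma map_apply (i : ℕ) (f : X →ₗ[R] Y) (α : ExtQuot 𝔞 i X) :
    map 𝔞 i f α = α.comp (Ext.mk₀ (ModuleCat.ofHom f)) (add_zero i) := rfl

lemma map_map (i : ℕ) (f : X →ₗ[R] Y) (g : Y →ₗ[R] Z) (α : ExtQuot 𝔞 i X) :
    map 𝔞 i g (map 𝔞 i f α) = map 𝔞 i (g ∘ₗ f) α := by
  simp only [map_apply, ModuleCat.ofHom_comp, ← Ext.mk₀_comp_mk₀]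
  exact Ext.comp_assoc_of_third_deg_zero ..

lemma map_comp (i : ℕ) (f : X →ₗ[R] Y) (g : Y →ₗ[R] Z) :
    map 𝔞 i (g ∘ₗ f) = map 𝔞 i g ∘ₗ map 𝔞 i f := by
  ext1 α
  exact (map_map ..).symm

lemma map_add (i : ℕ) (f g : X →ₗ[R] Y) : map 𝔞 i (f + g) = map 𝔞 i f + map 𝔞 i g := by
  ext1 α
  simp only [map_apply, ModuleCat.ofHom_add, Ext.mk₀_add, Ext.comp_add, LinearMap.add_apply]

lemma map_smul (i : ℕ) (r : R) (f : X →ₗ[R] Y) : map 𝔞 i (r • f) = r • map 𝔞 i f := by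
  ext1 α
  have : ModuleCat.ofHom (r • f) = r • ModuleCat.ofHom f := rfl
  simp only [map_apply, this, Ext.mk₀_smul, Ext.comp_smul, LinearMap.smul_apply]

lemma map_id (i : ℕ) : map 𝔞 i (LinearMap.id : X →ₗ[R] X) = LinearMap.id := by
  ext1 α
  exact Ext.comp_mk₀_id α

lemma map_zero (i : ℕ) : map 𝔞 i (0 : X →ₗ[R] Y) = 0 := by
  simpa using map_smul 𝔞 i 0 (0 : X →ₗ[R] Y)

lemma smul_eq_zero {x : R} (hx : x ∈ 𝔞) (i : ℕ) (α : ExtQuot 𝔞 i X) : x • α = 0 := by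
  have h : x • 𝟙 (ModuleCat.of R (R ⧸ 𝔞)) = 0 := by
    ext
    simpa [Algebra.smul_def] using Ideal.Quotient.eq_zero_iff_mem.2 hx
  have : x • α = (Ext.mk₀ (x • 𝟙 (ModuleCat.of R (R ⧸ 𝔞)))).comp α (zero_add i) := by
    simp [Ext.mk₀_smul]
  rw [this, h]
  simp

lemma map_zero_injective {f : X →ₗ[R] Y} (hf : Function.Injective f) :
    Function.Injective (map 𝔞 0 f) :=
  have := (ModuleCat.mono_iff_injective (ModuleCat.ofHom f)).2 hf
  Ext.postcomp_mk₀_injective_of_mono _ (ModuleCat.ofHom f)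

lemma exists_delta {f : X →ₗ[R] Y} {g : Y →ₗ[R] Z} (hf : Function.Injective f)
    (hg : Function.Surjective g) (h : Function.Exact f g) :
    (∀ i, Function.Exact (map 𝔞 i f) (map 𝔞 i g)) ∧
    ∀ i, ∃ δ : ExtQuot 𝔞 i Z →ₗ[R] ExtQuot 𝔞 (i + 1) X,
      Function.Exact (map 𝔞 i g) δ ∧ Function.Exact δ (map 𝔞 (i + 1) f) := by
  let S : ShortComplex (ModuleCat.{u} R) :=
    ⟨ModuleCat.ofHom f, ModuleCat.ofHom g, by ext x; exact h.apply_apply_eq_zero x⟩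
  have hS : S.ShortExact := ModuleCat.shortComplex_shortExact S h hf hg
  refine ⟨fun i ↦ fun α ↦ ⟨fun hα ↦ Ext.covariant_sequence_exact₂ _ hS α hα, ?_⟩,
    fun i ↦ ⟨hS.extClass.postcompOfLinear R _ rfl, fun α ↦ ⟨fun hα ↦
      Ext.covariant_sequence_exact₃ _ hS α rfl hα, ?_⟩, fun α ↦ ⟨fun hα ↦
      Ext.covariant_sequence_exact₁ _ hS α hα rfl, ?_⟩⟩⟩
  · rintro ⟨α, rfl⟩
    rw [map_map, h.linearMap_comp_eq_zero, map_zero, LinearMap.zero_apply]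
  · rintro ⟨α, rfl⟩
    change (α.comp (Ext.mk₀ S.g) (add_zero i)).comp hS.extClass rfl = 0
    simp only [Ext.comp_assoc_of_second_deg_zero, ShortComplex.ShortExact.comp_extClass,
      Ext.comp_zero]
  · rintro ⟨α, rfl⟩
    change (α.comp hS.extClass rfl).comp (Ext.mk₀ S.f) (add_zero (i + 1)) = 0
    simp only [Ext.comp_assoc_of_third_deg_zero, ShortComplex.ShortExact.extClass_comp,
      Ext.comp_zero]

lemma liftQ_toSpanSingleton_one (m : X) (h : 𝔞 ≤ LinearMap.ker (LinearMap.toSpanSingleton R X m)) :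
    𝔞.liftQ (LinearMap.toSpanSingleton R X m) h (1 : R ⧸ 𝔞) = m :=
  one_smul R m

/-- `Ext^0_R(R/𝔞, X)` is the submodule of elements of `X` killed by `𝔞`. -/
noncomputable def zeroEquiv : ExtQuot 𝔞 0 X ≃ₗ[R] Submodule.torsionBySet R X 𝔞 :=
  Ext.linearEquiv₀.trans <| ModuleCat.homLinearEquiv.trans <| LinearEquiv.symm
    { toFun m := 𝔞.liftQ (LinearMap.toSpanSingleton R X m.1) fun x hx ↦ by
        simpa using (Submodule.mem_torsionBySet_iff _ _).1 m.2 ⟨x, hx⟩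
      map_add' m n := by ext; simp [liftQ_toSpanSingleton_one]
      map_smul' r m := by ext; simp [liftQ_toSpanSingleton_one]
      invFun φ := ⟨φ 1, (Submodule.mem_torsionBySet_iff _ _).2 fun x ↦ by
        rw [← LinearMap.map_smul]
        have : (x : R) • (1 : R ⧸ 𝔞) = 0 := by
          simpa [Algebra.smul_def] using Ideal.Quotient.eq_zero_iff_mem.2 x.2
        rw [this, _root_.map_zero]⟩
      left_inv m := by
        ext
        simp [liftQ_toSpanSingleton_one]
      right_inv φ := by
        ext
        simp }

end ExtQuot
end

section

namespace Submodule

variable {R : Type*} [CommRing R] {X Y : Type*} [AddCommGroup X] [Module R X]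
  [AddCommGroup Y] [Module R Y]

lemma fg_of_le_fg [IsNoetherianRing R] {N L : Submodule R X} (hL : L.FG) (h : N ≤ L) : N.FG :=
  have : IsNoetherian R L := isNoetherian_of_fg_of_noetherian L hL
  FG.of_le_of_isNoetherian h

lemma exists_fg_le_map_eq {f : X →ₗ[R] Y} {P : Submodule R X} (h : (P.map f).FG) :
    ∃ N ≤ P, N.FG ∧ N.map f = P.map f := by
  classical
  obtain ⟨s, hs⟩ := h
  have hsub : (s : Set Y) ⊆ f '' P := by
    rw [← map_coe, ← hs]
    exact subset_span
  obtain ⟨t, ht, rfl⟩ := Finset.subset_set_image_iff.1 hsub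
  refine ⟨span R t, span_le.2 ht, ⟨t, rfl⟩, ?_⟩
  rw [map_span, ← hs, Finset.coe_image]

end Submodule

/-- A class of `R`-modules closed under submodules, quotients and extensions. -/
structure SerreClass (R : Type u) [CommRing R] where
  /-- Membership in the class. -/
  mem : ∀ (X : Type u) [AddCommGroup X] [Module R X], Prop
  of_subsingleton : ∀ (X : Type u) [AddCommGroup X] [Module R X] [Subsingleton X], mem X
  of_injective : ∀ {X Y : Type u} [AddCommGroup X] [Module R X] [AddCommGroup Y] [Module R Y]
    (f : X →ₗ[R] Y), Function.Injective f → mem Y → mem X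
  of_surjective : ∀ {X Y : Type u} [AddCommGroup X] [Module R X] [AddCommGroup Y] [Module R Y]
    (f : X →ₗ[R] Y), Function.Surjective f → mem X → mem Y
  of_exact : ∀ {X Y Z : Type u} [AddCommGroup X] [Module R X] [AddCommGroup Y] [Module R Y]
    [AddCommGroup Z] [Module R Z] (f : X →ₗ[R] Y) (g : Y →ₗ[R] Z), Function.Exact f g →
    mem X → mem Z → mem Y

namespace SerreClass

variable {R : Type u} [CommRing R] {X Y Z : Type u} [AddCommGroup X] [Module R X]
  [AddCommGroup Y] [Module R Y] [AddCommGroup Z] [Module R Z]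

lemma of_equiv (S : SerreClass R) (e : X ≃ₗ[R] Y) (h : S.mem X) : S.mem Y :=
  S.of_injective e.symm.toLinearMap e.symm.injective h

lemma of_quotient (S : SerreClass R) (L : Submodule R X) (h : S.mem L) (h' : S.mem (X ⧸ L)) :
    S.mem X :=
  S.of_exact L.subtype L.mkQ (LinearMap.exact_subtype_mkQ L) h h'

lemma prod (S : SerreClass R) (hX : S.mem X) (hY : S.mem Y) : S.mem (X × Y) :=
  S.of_exact (LinearMap.inl R X Y) (LinearMap.snd R X Y) .inl_snd hX hY

lemma pi (S : SerreClass R) (hX : S.mem X) (n : ℕ) : S.mem (Fin n → X) := by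
  induction n with
  | zero => exact S.of_subsingleton _
  | succ n ih => exact S.of_equiv (Fin.consLinearEquiv R fun _ : Fin (n + 1) ↦ X) (S.prod hX ih)

/-- The class of extensions of modules in `T` by finitely generated modules. -/
def fgBy [IsNoetherianRing R] (T : SerreClass R) : SerreClass R where
  mem X _ _ := ∃ L : Submodule R X, L.FG ∧ T.mem (X ⧸ L)
  of_subsingleton X _ _ _ := ⟨⊥, Submodule.fg_bot, T.of_subsingleton _⟩
  of_injective {X Y} _ _ _ _ f hf := by
    rintro ⟨L, hL, hT⟩
    refine ⟨L.comap f, ?_, T.of_injective (Submodule.mapQ (L.comap f) L f le_rfl) ?_ hT⟩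
    · exact Submodule.fg_of_fg_map_injective f hf
        (Submodule.fg_of_le_fg hL (Submodule.map_comap_le f L))
    · rw [← LinearMap.ker_eq_bot, Submodule.ker_mapQ, Submodule.mkQ_map_self]
  of_surjective {X Y} _ _ _ _ f hf := by
    rintro ⟨L, hL, hT⟩
    refine ⟨L.map f, hL.map f, T.of_surjective
      (Submodule.mapQ L (L.map f) f (Submodule.le_comap_map f L)) ?_ hT⟩
    rw [← LinearMap.range_eq_top, Submodule.range_mapQ, LinearMap.range_eq_top.2 hf,
      Submodule.map_top, Submodule.range_mkQ]
  of_exact {X Y Z} _ _ _ _ _ _ f g hfg := by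
    rintro ⟨L, hL, hT⟩ ⟨L', hL', hT'⟩
    obtain ⟨N, hN, hNfg, hN'⟩ := Submodule.exists_fg_le_map_eq
      (Submodule.fg_of_le_fg hL' (Submodule.map_comap_le g L'))
    refine ⟨L.map f ⊔ N, (hL.map f).sup hNfg, T.of_exact
      (Submodule.mapQ L (L.map f ⊔ N) f (Submodule.map_le_iff_le_comap.1 le_sup_left))
      (Submodule.mapQ (L.map f ⊔ N) L' g (sup_le ?_ hN)) ?_ hT hT'⟩
    · rintro _ ⟨x, -, rfl⟩
      simp [hfg.apply_apply_eq_zero]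
    · rw [LinearMap.exact_iff]
      refine le_antisymm ?_ ?_
      · intro y hy
        obtain ⟨y, rfl⟩ := Submodule.mkQ_surjective _ y
        have hy : g y ∈ L' := by simpa using hy
        obtain ⟨n, hn, hny⟩ : g y ∈ N.map g := by
          rw [hN']
          exact ⟨y, hy, rfl⟩
        obtain ⟨x, hx⟩ := (hfg (y - n)).1 (by simp [hny])
        refine ⟨L.mkQ x, ?_⟩
        simp only [Submodule.mkQ_apply, Submodule.mapQ_apply, hx]
        rw [Submodule.Quotient.eq]
        simpa using Submodule.mem_sup_right (S := L.map f) hn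
      · rintro _ ⟨x, rfl⟩
        obtain ⟨x, rfl⟩ := Submodule.mkQ_surjective _ x
        simp [hfg.apply_apply_eq_zero]

lemma mem_fgBy_of_finite [IsNoetherianRing R] (T : SerreClass R) [h : Module.Finite R X] :
    (fgBy T).mem X :=
  ⟨⊤, h.fg_top, T.of_subsingleton _⟩

lemma mem_fgBy_of_imp [IsNoetherianRing R] {T T' : SerreClass R}
    (hT : ∀ (X : Type u) [AddCommGroup X] [Module R X], T.mem X → T'.mem X)
    (h : (fgBy T).mem X) : (fgBy T').mem X := by
  obtain ⟨L, hL, h⟩ := h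
  exact ⟨L, hL, hT _ h⟩

/-- Modules each of whose elements is killed by an element of `Σ`. -/
def tors (S : Submonoid R) : SerreClass R where
  mem X _ _ := ∀ x : X, ∃ s ∈ S, s • x = 0
  of_subsingleton X _ _ _ x := ⟨1, S.one_mem, Subsingleton.elim _ _⟩
  of_injective f hf h x := by
    obtain ⟨s, hs, hx⟩ := h (f x)
    exact ⟨s, hs, hf (by simpa using hx)⟩
  of_surjective f hf h y := by
    obtain ⟨x, rfl⟩ := hf y
    obtain ⟨s, hs, hx⟩ := h x
    exact ⟨s, hs, by rw [← map_smul, hx, map_zero]⟩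
  of_exact f g hfg h h' y := by
    obtain ⟨s, hs, hy⟩ := h' (g y)
    obtain ⟨x, hx⟩ := (hfg (s • y)).1 (by simpa using hy)
    obtain ⟨t, ht, htx⟩ := h x
    exact ⟨t * s, S.mul_mem ht hs, by rw [mul_smul, ← hx, ← map_smul, htx, map_zero]⟩

/-- Modules each of whose elements is killed by a power of a fixed element of `S`. -/
def powTors (S : Submonoid R) : SerreClass R where
  mem X _ _ := ∃ s ∈ S, ∀ x : X, ∃ n : ℕ, s ^ n • x = 0
  of_subsingleton X _ _ _ := ⟨1, S.one_mem, fun x ↦ ⟨0, Subsingleton.elim _ _⟩⟩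
  of_injective f hf := by
    rintro ⟨s, hs, h⟩
    refine ⟨s, hs, fun x ↦ ?_⟩
    obtain ⟨n, hx⟩ := h (f x)
    exact ⟨n, hf (by simpa using hx)⟩
  of_surjective f hf := by
    rintro ⟨s, hs, h⟩
    refine ⟨s, hs, fun y ↦ ?_⟩
    obtain ⟨x, rfl⟩ := hf y
    obtain ⟨n, hx⟩ := h x
    exact ⟨n, by rw [← map_smul, hx, map_zero]⟩
  of_exact f g hfg := by
    rintro ⟨s, hs, h⟩ ⟨t, ht, h'⟩
    refine ⟨s * t, S.mul_mem hs ht, fun y ↦ ?_⟩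
    obtain ⟨n, hy⟩ := h' (g y)
    obtain ⟨x, hx⟩ := (hfg (t ^ n • y)).1 (by simpa using hy)
    obtain ⟨m, hm⟩ := h x
    refine ⟨m + n, ?_⟩
    have : s ^ m • t ^ n • y = 0 := by rw [← hx, ← map_smul, hm, map_zero]
    have e : (s * t) ^ (m + n) = (t ^ m * s ^ n) * (s ^ m * t ^ n) := by ring
    rw [e, mul_smul, mul_smul (s ^ m), this, smul_zero]

/-- Modules with support in a given set of primes. -/
def supp (Z : Set (PrimeSpectrum R)) : SerreClass R where
  mem X _ _ := Module.support R X ⊆ Z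
  of_subsingleton X _ _ _ := by simp [Module.support_eq_empty_iff.2 ‹_›]
  of_injective f hf h := (Module.support_subset_of_injective f hf).trans h
  of_surjective f hf h := (Module.support_subset_of_surjective f hf).trans h
  of_exact {X Y Z} _ _ _ _ _ _ f g hfg h h' := by
    have h1 : Function.Exact (LinearMap.range f).subtype g := fun y ↦ by simp [hfg y]
    have h2 : Function.Exact (LinearMap.range f).subtype g.rangeRestrict := fun y ↦ by
      rw [← h1 y, ← LinearMap.mem_ker, LinearMap.ker_rangeRestrict, LinearMap.mem_ker]
    rw [Module.support_of_exact h2 (Submodule.injective_subtype _) g.surjective_rangeRestrict]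
    exact Set.union_subset
      ((Module.support_subset_of_surjective _ f.surjective_rangeRestrict).trans h)
      ((Module.support_subset_of_injective _ (Submodule.injective_subtype _)).trans h')

/-- Finitely generated modules. -/
abbrev fin (R : Type u) [CommRing R] [IsNoetherianRing R] : SerreClass R := fgBy (tors ⊥)

lemma mem_fin_iff [IsNoetherianRing R] : (fin R).mem X ↔ Module.Finite R X := by
  refine ⟨?_, fun _ ↦ mem_fgBy_of_finite _⟩
  rintro ⟨L, hL, h⟩
  have : L = ⊤ := by
    refine eq_top_iff.2 fun x _ ↦ ?_
    obtain ⟨s, hs, hx⟩ := h (L.mkQ x)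
    rw [Submonoid.mem_bot.1 hs, one_smul] at hx
    simpa using hx
  exact ⟨this ▸ hL⟩

lemma mem_fgBy_of_fin [IsNoetherianRing R] (T : SerreClass R) (h : (fin R).mem X) :
    (fgBy T).mem X :=
  have := mem_fin_iff.1 h
  mem_fgBy_of_finite T

section Ext
open Abelian

theorem ext_mem (S : SerreClass R) [IsNoetherianRing R] (hX : S.mem X) (N : ModuleCat.{u} R)
    [Module.Finite R N] (i : ℕ) : S.mem (Abelian.Ext N (ModuleCat.of R X) i) := by
  induction i generalizing N with
  | zero =>
    obtain ⟨n, f, hf⟩ := Module.Finite.exists_fin' R N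
    let e : Abelian.Ext N (ModuleCat.of R X) 0 ≃ₗ[R] (N →ₗ[R] X) :=
      Ext.linearEquiv₀.trans ModuleCat.homLinearEquiv
    let φ : (N →ₗ[R] X) →ₗ[R] (Fin n → X) :=
      LinearMap.pi fun j ↦ LinearMap.applyₗ (f (Pi.single j 1))
    refine S.of_equiv e.symm (S.of_injective φ ?_ (S.pi hX n))
    intro g g' h
    have : g ∘ₗ f = g' ∘ₗ f := by
      ext j
      simpa [φ] using congrFun h j
    exact (LinearMap.cancel_right hf).1 this
  | succ n ih =>
    obtain ⟨N', _, _, _, _, f, hf⟩ := Module.exists_finite_presentation R N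
    let exac := LinearMap.shortExact_shortComplexKer hf
    have : Module.Finite R (LinearMap.ker f) := inferInstance
    exact S.of_surjective (exac.extClass.precompOfLinear R _ (add_comm 1 n))
      (precomp_extClass_surjective_of_projective_X₂ _ exac n) (ih (ModuleCat.of R (LinearMap.ker f)))

lemma extQuot_mem (S : SerreClass R) [IsNoetherianRing R] (𝔞 : Ideal R) (hX : S.mem X) (i : ℕ) :
    S.mem (ExtQuot 𝔞 i X) :=
  S.ext_mem hX _ i

end Ext

end SerreClass
end

section

namespace Submodule

variable {R : Type*} [CommRing R] {X Y : Type*} [AddCommGroup X] [Module R X]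
  [AddCommGroup Y] [Module R Y]

/-- Inclusion of submodules up to a finitely generated submodule. -/
def AlmostLE (P Q : Submodule R X) : Prop := ∃ F : Submodule R X, F.FG ∧ P ≤ Q ⊔ F

namespace AlmostLE

variable {P Q S : Submodule R X}

lemma of_le (h : P ≤ Q) : AlmostLE P Q := ⟨⊥, fg_bot, by simpa⟩

lemma of_fg (h : P.FG) (Q : Submodule R X) : AlmostLE P Q := ⟨P, h, le_sup_right⟩

lemma trans (h : AlmostLE P Q) (h' : AlmostLE Q S) : AlmostLE P S := by
  obtain ⟨F, hF, h⟩ := h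
  obtain ⟨F', hF', h'⟩ := h'
  refine ⟨F' ⊔ F, hF'.sup hF, h.trans ?_⟩
  rw [← sup_assoc]
  exact sup_le_sup_right h' F

lemma trans_le (h : AlmostLE P Q) (h' : Q ≤ S) : AlmostLE P S := h.trans (of_le h')

lemma fg [IsNoetherianRing R] (h : AlmostLE P ⊥) : P.FG := by
  obtain ⟨F, hF, h⟩ := h
  exact fg_of_le_fg hF (by simpa using h)

lemma map (h : AlmostLE P Q) (f : X →ₗ[R] Y) : AlmostLE (P.map f) (Q.map f) := by
  obtain ⟨F, hF, h⟩ := h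
  exact ⟨F.map f, hF.map f, (map_mono h).trans (map_sup ..).le⟩

lemma comap [IsNoetherianRing R] {P Q : Submodule R Y} (h : AlmostLE P Q) (f : X →ₗ[R] Y) :
    AlmostLE (P.comap f) (Q.comap f) := by
  obtain ⟨F, hF, h⟩ := h
  obtain ⟨N, -, hN, hN'⟩ := exists_fg_le_map_eq
    (fg_of_le_fg (hF.map Q.mkQ) (map_comap_le (Q.mkQ ∘ₗ f) (F.map Q.mkQ)))
  refine ⟨N, hN, fun x hx ↦ ?_⟩
  obtain ⟨q, hq, y, hy, hqy⟩ := mem_sup.1 (h hx)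
  have : (Q.mkQ ∘ₗ f) x ∈ N.map (Q.mkQ ∘ₗ f) := by
    rw [hN']
    refine ⟨x, ⟨y, hy, ?_⟩, rfl⟩
    rw [LinearMap.comp_apply, ← hqy, map_add]
    simpa using hq
  obtain ⟨n, hn, hnx⟩ := this
  refine mem_sup.2 ⟨x - n, ?_, n, hn, by simp⟩
  rw [mem_comap, map_sub]
  exact (Submodule.Quotient.eq Q).1 hnx.symm

lemma inf [IsNoetherianRing R] (h : AlmostLE P Q) (S : Submodule R X) :
    AlmostLE (S ⊓ P) (S ⊓ Q) := by
  simpa only [map_comap_subtype] using (h.comap S.subtype).map S.subtype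

/-- The modular law in the form used to split a submodule. -/
lemma inf_of_sup [IsNoetherianRing R] {A : Submodule R X} (h : AlmostLE P (Q ⊔ A)) (hQ : Q ≤ P) :
    AlmostLE P (Q ⊔ P ⊓ A) := by
  have := h.inf P
  rw [inf_idem] at this
  refine this.trans_le ?_
  rw [inf_comm, sup_inf_assoc_of_le A hQ, inf_comm]

lemma sup_of_fg (hS : S.FG) (h : AlmostLE P (Q ⊔ S)) : AlmostLE P Q :=
  h.trans ⟨S, hS, le_rfl⟩

end AlmostLE

end Submodule
end

section
open Submodule LinearMap

namespace ExtQuot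

variable {R : Type u} [CommRing R] (𝔞 : Ideal R) {A B : Type u} [AddCommGroup A] [Module R A]
  [AddCommGroup B] [Module R B] (f : A →ₗ[R] B) (x : R)

/-- The map `(a, b) ↦ f a - x b`. -/
def mixed : A × B →ₗ[R] B := f.coprod (-(x • LinearMap.id))

lemma mixed_apply (a : A) (b : B) : mixed f x (a, b) = f a - x • b := by
  simp [mixed, sub_eq_add_neg]

lemma mem_ker_mixed {z : A × B} : z ∈ ker (mixed f x) ↔ f z.1 = x • z.2 := by
  rw [LinearMap.mem_ker, ← Prod.mk.eta (p := z), mixed_apply, sub_eq_zero]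

/-- The first projection from the homotopy pullback of `f` and `x`. -/
def pullFst : ker (mixed f x) →ₗ[R] A := LinearMap.fst R A B ∘ₗ (ker (mixed f x)).subtype

/-- The second projection from the homotopy pullback of `f` and `x`. -/
def pullSnd : ker (mixed f x) →ₗ[R] B := LinearMap.snd R A B ∘ₗ (ker (mixed f x)).subtype

/-- The map `a ↦ (x a, f a)` to the pullback of `f` and `x`. -/
def toPull : A →ₗ[R] ker (mixed f x) :=
  ((x • LinearMap.id).prod f).codRestrict _ fun _ ↦ (mem_ker_mixed f x).2 (f.map_smul x _)

/-- The restriction of `mixed f x` to the first factor. -/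
def mixedInl : A →ₗ[R] range (mixed f x) := (mixed f x).rangeRestrict ∘ₗ LinearMap.inl R A B

/-- The restriction of `mixed f x` to the second factor. -/
def mixedInr : B →ₗ[R] range (mixed f x) := (mixed f x).rangeRestrict ∘ₗ LinearMap.inr R A B

variable (i : ℕ)

variable {x}

lemma map_smul_eq_zero {A B : Type u} [AddCommGroup A] [Module R A] [AddCommGroup B] [Module R B]
    (f : A →ₗ[R] B) (hx : x ∈ 𝔞) : map 𝔞 i (x • f) = 0 := by
  ext1 α
  rw [map_smul, LinearMap.smul_apply, smul_eq_zero 𝔞 hx, LinearMap.zero_apply]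

lemma map_pullFst_toPull (hx : x ∈ 𝔞) : map 𝔞 i (pullFst f x) ∘ₗ map 𝔞 i (toPull f x) = 0 := by
  rw [← map_comp, ← map_smul_eq_zero 𝔞 i (LinearMap.id : A →ₗ[R] A) hx]
  rfl

lemma map_pullSnd_toPull : map 𝔞 i (pullSnd f x) ∘ₗ map 𝔞 i (toPull f x) = map 𝔞 i f := by
  rw [← map_comp]
  rfl

lemma map_comp_pullFst (hx : x ∈ 𝔞) : map 𝔞 i f ∘ₗ map 𝔞 i (pullFst f x) = 0 := by
  rw [← map_comp, ← map_smul_eq_zero 𝔞 i (pullSnd f x) hx]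
  congr 1
  ext z
  exact (mem_ker_mixed f x).1 z.2

lemma map_subtype_mixedInl :
    map 𝔞 i (range (mixed f x)).subtype ∘ₗ map 𝔞 i (mixedInl f x) = map 𝔞 i f := by
  rw [← map_comp]
  congr 1
  ext a
  exact (mixed_apply f x a 0).trans (by rw [smul_zero, sub_zero])

lemma map_subtype_mixedInr (hx : x ∈ 𝔞) :
    map 𝔞 i (range (mixed f x)).subtype ∘ₗ map 𝔞 i (mixedInr f x) = 0 := by
  rw [← map_comp, ← map_smul_eq_zero 𝔞 i (-LinearMap.id : B →ₗ[R] B) hx]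
  congr 1
  ext b
  exact (mixed_apply f x 0 b).trans (by simp)

lemma map_mixedInr_comp (hx : x ∈ 𝔞) : map 𝔞 i (mixedInr f x) ∘ₗ map 𝔞 i f = 0 := by
  rw [← map_comp, ← map_smul_eq_zero 𝔞 i (-mixedInl f x) hx]
  congr 1
  ext a
  refine (mixed_apply f x 0 (f a)).trans ?_
  change _ = x • -(mixed f x (a, 0))
  rw [mixed_apply]
  simp

lemma map_prod (γ : ExtQuot 𝔞 i (A × B)) :
    map 𝔞 i (LinearMap.inl R A B) (map 𝔞 i (LinearMap.fst R A B) γ) +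
      map 𝔞 i (LinearMap.inr R A B) (map 𝔞 i (LinearMap.snd R A B) γ) = γ := by
  rw [map_map, map_map, ← LinearMap.add_apply, ← map_add]
  have : LinearMap.inl R A B ∘ₗ LinearMap.fst R A B + LinearMap.inr R A B ∘ₗ LinearMap.snd R A B =
    LinearMap.id := by ext <;> simp
  rw [this, map_id, LinearMap.id_apply]

lemma map_fst_inl_add (α : ExtQuot 𝔞 i A) (β : ExtQuot 𝔞 i B) :
    map 𝔞 i (LinearMap.fst R A B) (map 𝔞 i (LinearMap.inl R A B) α +
      map 𝔞 i (LinearMap.inr R A B) β) = α := by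
  rw [_root_.map_add, map_map, map_map, LinearMap.fst_comp_inl, LinearMap.fst_comp_inr, map_id,
    map_zero]
  simp

lemma map_snd_inl_add (α : ExtQuot 𝔞 i A) (β : ExtQuot 𝔞 i B) :
    map 𝔞 i (LinearMap.snd R A B) (map 𝔞 i (LinearMap.inl R A B) α +
      map 𝔞 i (LinearMap.inr R A B) β) = β := by
  rw [_root_.map_add, map_map, map_map, LinearMap.snd_comp_inl, LinearMap.snd_comp_inr, map_id,
    map_zero]
  simp

lemma exact_mixed : Function.Exact (ker (mixed f x)).subtype (mixed f x).rangeRestrict :=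
  LinearMap.exact_iff.2 (by rw [LinearMap.ker_rangeRestrict, range_subtype])

lemma map_mixedInl_add_eq_zero_iff (α : ExtQuot 𝔞 i A) (β : ExtQuot 𝔞 i B) :
    map 𝔞 i (mixedInl f x) α + map 𝔞 i (mixedInr f x) β = 0 ↔
      ∃ ζ, map 𝔞 i (pullFst f x) ζ = α ∧ map 𝔞 i (pullSnd f x) ζ = β := by
  have h := (exists_delta 𝔞 (injective_subtype _) (mixed f x).surjective_rangeRestrict
    (exact_mixed f)).1 i
  rw [mixedInl, mixedInr, ← map_map, ← map_map, ← _root_.map_add, h]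
  constructor
  · rintro ⟨ζ, hζ⟩
    refine ⟨ζ, ?_, ?_⟩
    · rw [pullFst, ← map_map, hζ, map_fst_inl_add]
    · rw [pullSnd, ← map_map, hζ, map_snd_inl_add]
  · rintro ⟨ζ, rfl, rfl⟩
    refine ⟨ζ, ?_⟩
    rw [pullFst, pullSnd, ← map_map, ← map_map 𝔞 i _ (LinearMap.snd R A B), map_prod]

lemma map_ker_pullSnd : (ker (map 𝔞 i (pullSnd f x))).map (map 𝔞 i (pullFst f x)) =
    ker (map 𝔞 i (mixedInl f x)) := by
  ext α
  have := map_mixedInl_add_eq_zero_iff 𝔞 f (x := x) i α 0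
  rw [_root_.map_zero, add_zero] at this
  rw [LinearMap.mem_ker, this]
  exact exists_congr fun ζ ↦ and_comm

lemma map_ker_pullFst : (ker (map 𝔞 i (pullFst f x))).map (map 𝔞 i (pullSnd f x)) =
    ker (map 𝔞 i (mixedInr f x)) := by
  ext β
  have := map_mixedInl_add_eq_zero_iff 𝔞 f (x := x) i 0 β
  rw [_root_.map_zero, zero_add] at this
  rw [LinearMap.mem_ker, this]
  rfl

lemma ker_pullFst_inf_ker_pullSnd :
    ker (map 𝔞 i (pullFst f x)) ⊓ ker (map 𝔞 i (pullSnd f x)) =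
      ker (map 𝔞 i (ker (mixed f x)).subtype) := by
  ext ζ
  simp only [mem_inf, LinearMap.mem_ker]
  constructor
  · rintro ⟨h, h'⟩
    rw [pullFst, ← map_map] at h
    rw [pullSnd, ← map_map] at h'
    rw [← map_prod 𝔞 i (map 𝔞 i (ker (mixed f x)).subtype ζ), h, h']
    simp
  · intro h
    rw [pullFst, ← map_map, pullSnd, ← map_map, h]
    simp

lemma ker_pullFst_inf_ker_pullSnd_zero :
    ker (map 𝔞 0 (pullFst f x)) ⊓ ker (map 𝔞 0 (pullSnd f x)) = ⊥ := by
  rw [ker_pullFst_inf_ker_pullSnd, LinearMap.ker_eq_bot]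
  exact map_zero_injective 𝔞 (injective_subtype _)

lemma exists_mixed_delta :
    ∃ δ : ExtQuot 𝔞 i (range (mixed f x)) →ₗ[R] ExtQuot 𝔞 (i + 1) (ker (mixed f x)),
      ker (map 𝔞 (i + 1) (pullFst f x)) ⊓ ker (map 𝔞 (i + 1) (pullSnd f x)) = range δ ∧
      ker δ = range (map 𝔞 i (mixedInl f x)) ⊔ range (map 𝔞 i (mixedInr f x)) := by
  obtain ⟨δ, h, h'⟩ := (exists_delta 𝔞 (injective_subtype _)
    (mixed f x).surjective_rangeRestrict (exact_mixed f)).2 i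
  refine ⟨δ, ?_, ?_⟩
  · rw [ker_pullFst_inf_ker_pullSnd, h'.linearMap_ker_eq]
  · rw [h.linearMap_ker_eq]
    rw [mixedInl, mixedInr, map_comp, map_comp, LinearMap.range_comp, LinearMap.range_comp,
      ← Submodule.map_sup, LinearMap.range_eq_map (map 𝔞 i (mixed f x).rangeRestrict)]
    congr 1
    refine (eq_top_iff.2 fun γ _ ↦ ?_).symm
    rw [← map_prod 𝔞 i γ]
    exact add_mem (mem_sup_left (LinearMap.mem_range_self _ _))
      (mem_sup_right (LinearMap.mem_range_self _ _))

end ExtQuot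
end

section
open Submodule LinearMap

namespace ExtQuot

variable {R : Type u} [CommRing R] [IsNoetherianRing R] (𝔞 : Ideal R) {A B : Type u}
  [AddCommGroup A] [Module R A] [AddCommGroup B] [Module R B] (f : A →ₗ[R] B) {x : R}

/-- The map induced by `f` on `Ext^i_R(R/𝔞, -)` has finitely generated kernel. -/
def FinKer (i : ℕ) : Prop := (ker (map 𝔞 i f)).FG

/-- The map induced by `f` on `Ext^i_R(R/𝔞, -)` has finitely generated cokernel. -/
def FinCoker (i : ℕ) : Prop := AlmostLE ⊤ (range (map 𝔞 i f))

variable {f} {i : ℕ}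

lemma FinKer.toPull (h : FinKer 𝔞 f i) : FinKer 𝔞 (toPull f x) i := by
  refine fg_of_le_fg h fun α hα ↦ ?_
  rw [LinearMap.mem_ker] at hα ⊢
  rw [← map_pullSnd_toPull 𝔞 f i (x := x), LinearMap.comp_apply, hα, _root_.map_zero]

/-- The part of the cokernel of `toPull` not coming from `ker f` and `coker f`. -/
lemma almostLE_toPull (hx : x ∈ 𝔞) (h : FinKer 𝔞 f i) (h' : FinCoker 𝔞 f i) :
    AlmostLE ⊤ (range (map 𝔞 i (toPull f x)) ⊔
      ker (map 𝔞 i (pullFst f x)) ⊓ ker (map 𝔞 i (pullSnd f x))) := by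
  set p := map 𝔞 i (pullFst f x)
  set q := map 𝔞 i (pullSnd f x)
  set g := map 𝔞 i (ExtQuot.toPull f x)
  have hp : AlmostLE ⊤ (ker p) := by
    have := (AlmostLE.of_fg h ⊥).comap p
    rwa [Submodule.comap_bot, ← LinearMap.ker_comp, map_comp_pullFst 𝔞 f i hx, ker_zero] at this
  have hq : AlmostLE ⊤ (range g ⊔ ker q) := by
    have := h'.comap q
    rwa [← map_pullSnd_toPull 𝔞 f i (x := x), LinearMap.range_comp, comap_map_eq, comap_top] at this
  have hg : range g ≤ ker p := range_le_ker_iff.2 (map_pullFst_toPull 𝔞 f i hx)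
  exact hp.trans (((AlmostLE.of_le le_top).trans hq).inf_of_sup hg)

lemma FinCoker.toPull_zero (hx : x ∈ 𝔞) (h : FinKer 𝔞 f 0) (h' : FinCoker 𝔞 f 0) :
    FinCoker 𝔞 (toPull f x) 0 := by
  have := almostLE_toPull 𝔞 hx h h'
  rwa [ker_pullFst_inf_ker_pullSnd_zero, sup_bot_eq] at this

omit [IsNoetherianRing R] in
lemma map_zero_subtype_injective :
    Function.Injective (map 𝔞 0 (range (mixed f x)).subtype) :=
  map_zero_injective 𝔞 (injective_subtype _)

lemma FinCoker.toPull_one (hx : x ∈ 𝔞) (h0 : FinCoker 𝔞 f 0) (h : FinKer 𝔞 f 1)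
    (h' : FinCoker 𝔞 f 1) : FinCoker 𝔞 (toPull f x) 1 := by
  refine AlmostLE.sup_of_fg ?_ (almostLE_toPull 𝔞 hx h h')
  obtain ⟨δ, h1, h2⟩ := exists_mixed_delta 𝔞 f (x := x) 0
  rw [h1]
  have : AlmostLE ⊤ (range (map 𝔞 0 (mixedInl f x))) := by
    have := h0.comap (map 𝔞 0 (range (mixed f x)).subtype)
    rwa [← map_subtype_mixedInl 𝔞 f 0 (x := x), LinearMap.range_comp,
      comap_map_eq_of_injective (map_zero_subtype_injective 𝔞), comap_top] at this
  refine AlmostLE.fg ?_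
  have := this.map δ
  rw [← LinearMap.range_eq_map] at this
  refine this.trans_le ?_
  rw [Submodule.map_le_iff_le_comap, Submodule.comap_bot, h2]
  exact le_sup_left

/-- Finiteness of the kernel of `ι` in degree one. -/
lemma fg_ker_subtype_one (hx : x ∈ 𝔞) (h : FinKer 𝔞 f 1) (h' : FinCoker 𝔞 f 1)
    (hf2 : FinKer 𝔞 f 2) (hg : FinCoker 𝔞 (toPull f x) 2) :
    (ker (map 𝔞 1 (range (mixed f x)).subtype)).FG := by
  obtain ⟨δ, h1, h2⟩ := exists_mixed_delta 𝔞 f (x := x) 1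
  have hδ : (range δ).FG := by
    rw [← h1]
    refine fg_of_le_fg ?_ inf_le_right
    refine AlmostLE.fg ?_
    have := (hg.inf (ker (map 𝔞 2 (pullSnd f x)))).trans (.of_fg ?_ ⊥)
    · rwa [inf_top_eq] at this
    · refine fg_of_le_fg (hf2.map (map 𝔞 2 (ExtQuot.toPull f x))) ?_
      rintro _ ⟨hα, α, rfl⟩
      refine ⟨α, ?_, rfl⟩
      rw [SetLike.mem_coe, LinearMap.mem_ker] at hα ⊢
      rwa [← map_pullSnd_toPull 𝔞 f 2 (x := x)]
  set v := map 𝔞 1 (mixedInl f x)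
  set w := map 𝔞 1 (mixedInr f x)
  set j := map 𝔞 1 (range (mixed f x)).subtype
  have hw : (range w).FG := by
    refine AlmostLE.fg ?_
    have := h'.map w
    rwa [← LinearMap.range_eq_map, ← LinearMap.range_comp, map_mixedInr_comp 𝔞 f 1 hx,
      range_zero] at this
  have htop : AlmostLE ⊤ (range w ⊔ range v) := by
    have := (AlmostLE.of_fg hδ ⊥).comap δ
    rw [Submodule.comap_bot, h2, sup_comm] at this
    refine .trans (.of_le fun y _ ↦ ?_) this
    exact LinearMap.mem_range_self _ _
  have hwj : range w ≤ ker j := range_le_ker_iff.2 (map_subtype_mixedInr 𝔞 f 1 hx)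
  refine ((((AlmostLE.of_le le_top).trans htop).inf_of_sup hwj).trans
    (.of_fg (hw.sup ?_) ⊥)).fg
  refine fg_of_le_fg (h.map v) ?_
  rintro _ ⟨hα, α, rfl⟩
  refine ⟨α, ?_, rfl⟩
  rw [SetLike.mem_coe, LinearMap.mem_ker] at hα ⊢
  rwa [← map_subtype_mixedInl 𝔞 f 1 (x := x)]

lemma finite_of_almostLE_bot {X : Type u} [AddCommGroup X] [Module R X]
    (h : AlmostLE (⊤ : Submodule R X) ⊥) : Module.Finite R X := ⟨h.fg⟩

omit [IsNoetherianRing R] in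
lemma range_le_range_mixed : range f ≤ range (mixed f x) := by
  rintro _ ⟨a, rfl⟩
  exact ⟨(a, 0), by rw [mixed_apply, smul_zero, sub_zero]⟩

lemma finite_zero_quotient (hx : x ∈ 𝔞) (h0 : FinCoker 𝔞 f 0) (h : FinKer 𝔞 f 1)
    (h' : FinCoker 𝔞 f 1) (hf2 : FinKer 𝔞 f 2) (hg : FinCoker 𝔞 (toPull f x) 2) :
    Module.Finite R (ExtQuot 𝔞 0 (B ⧸ range (mixed f x))) := by
  obtain ⟨hE, hd⟩ := exists_delta 𝔞 (injective_subtype (range (mixed f x))) (mkQ_surjective _)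
    (exact_subtype_mkQ _)
  obtain ⟨d, hd1, hd2⟩ := hd 0
  refine finite_of_almostLE_bot ?_
  have := (AlmostLE.of_fg (fg_ker_subtype_one 𝔞 hx h h' hf2 hg) ⊥).comap d
  rw [Submodule.comap_bot, hd1.linearMap_ker_eq] at this
  refine (AlmostLE.of_le fun y _ ↦ ?_).trans (this.trans ?_)
  · exact (hd2 _).2 (LinearMap.mem_range_self _ _)
  · have := h0.map (map 𝔞 0 (range (mixed f x)).mkQ)
    rw [← LinearMap.range_eq_map, ← LinearMap.range_comp, ← map_comp] at this
    refine this.trans_le ?_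
    have : (range (mixed f x)).mkQ ∘ₗ f = 0 := by
      rw [← range_le_ker_iff, ker_mkQ]
      exact range_le_range_mixed
    rw [this, map_zero, range_zero]

/-- Ascent along `toPull` when `Ext^i_R(R/𝔞, B / (x B + im f))` is finite for all `i`. -/
lemma finKer_and_finCoker_of_toPull (hx : x ∈ 𝔞)
    (hW : ∀ i, Module.Finite R (ExtQuot 𝔞 i (B ⧸ range (mixed f x))))
    (hg : ∀ i, FinKer 𝔞 (toPull f x) i ∧ FinCoker 𝔞 (toPull f x) i) (i : ℕ) :
    FinKer 𝔞 f i ∧ FinCoker 𝔞 f i := by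
  have hι : (ker (map 𝔞 i (range (mixed f x)).subtype)).FG := by
    obtain ⟨hE, hd⟩ := exists_delta 𝔞 (injective_subtype (range (mixed f x))) (mkQ_surjective _)
      (exact_subtype_mkQ _)
    cases i with
    | zero =>
      rw [LinearMap.ker_eq_bot.2 (map_zero_injective 𝔞 (injective_subtype _))]
      exact fg_bot
    | succ i =>
      obtain ⟨d, hd1, hd2⟩ := hd i
      rw [hd2.linearMap_ker_eq, LinearMap.range_eq_map d]
      exact (hW i).fg_top.map d
  constructor
  · refine AlmostLE.fg ?_
    have h1 := (AlmostLE.of_fg hι ⊥).comap (map 𝔞 i (mixedInl f x))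
    rw [← LinearMap.ker_comp, map_subtype_mixedInl, Submodule.comap_bot, ← map_ker_pullSnd] at h1
    have h2 := ((AlmostLE.of_le (le_top (a := ker (map 𝔞 i (pullSnd f x))))).trans (hg i).2).map
      (map 𝔞 i (pullFst f x))
    rw [← LinearMap.range_comp, map_pullFst_toPull 𝔞 f i hx, range_zero] at h2
    exact h1.trans h2
  · have h1 := (AlmostLE.of_fg hι ⊥).comap (map 𝔞 i (mixedInr f x))
    rw [← LinearMap.ker_comp, map_subtype_mixedInr 𝔞 f i hx, Submodule.comap_bot,
      ← map_ker_pullFst, ker_zero] at h1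
    have h2 := ((AlmostLE.of_le (le_top (a := ker (map 𝔞 i (pullFst f x))))).trans (hg i).2).map
      (map 𝔞 i (pullSnd f x))
    rw [← LinearMap.range_comp, map_pullSnd_toPull 𝔞 f i] at h2
    exact h1.trans h2

end ExtQuot
end

section
open Submodule LinearMap

namespace ExtQuot

variable {R : Type u} [CommRing R] (𝔞 : Ideal R) {A B : Type u}
  [AddCommGroup A] [Module R A] [AddCommGroup B] [Module R B] (f : A →ₗ[R] B)

lemma exact_subtype_rangeRestrict : Function.Exact (ker f).subtype f.rangeRestrict :=
  LinearMap.exact_iff.2 (by rw [LinearMap.ker_rangeRestrict, range_subtype])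

lemma map_subtype_rangeRestrict (i : ℕ) :
    map 𝔞 i (range f).subtype ∘ₗ map 𝔞 i f.rangeRestrict = map 𝔞 i f := by
  rw [← map_comp]
  rfl

variable [IsNoetherianRing R] {f}

lemma finite_zero_ker (h : FinKer 𝔞 f 0) : Module.Finite R (ExtQuot 𝔞 0 (ker f)) := by
  refine ⟨fg_of_fg_map_injective _ (map_zero_injective 𝔞 (injective_subtype (ker f))) ?_⟩
  refine fg_of_le_fg h ?_
  rintro _ ⟨α, -, rfl⟩
  rw [LinearMap.mem_ker, map_map, comp_ker_subtype, map_zero, LinearMap.zero_apply]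

lemma almostLE_range_zero (h : FinCoker 𝔞 f 0) : AlmostLE ⊤ (range (map 𝔞 0 f.rangeRestrict)) := by
  have := h.comap (map 𝔞 0 (range f).subtype)
  rwa [← map_subtype_rangeRestrict 𝔞 f, LinearMap.range_comp,
    comap_map_eq_of_injective (map_zero_injective 𝔞 (injective_subtype _)), comap_top] at this

lemma finite_one_ker (h0 : FinCoker 𝔞 f 0) (h : FinKer 𝔞 f 1) :
    Module.Finite R (ExtQuot 𝔞 1 (ker f)) := by
  obtain ⟨-, hd⟩ := exists_delta 𝔞 (injective_subtype (ker f)) f.surjective_rangeRestrict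
    (exact_subtype_rangeRestrict f)
  obtain ⟨d, hd1, hd2⟩ := hd 0
  refine finite_of_almostLE_bot ?_
  have h1 := (AlmostLE.of_fg h ⊥).comap (map 𝔞 1 (ker f).subtype)
  rw [Submodule.comap_bot, hd2.linearMap_ker_eq, ← LinearMap.ker_comp, ← map_comp,
    comp_ker_subtype, map_zero, ker_zero] at h1
  have h2 := (almostLE_range_zero 𝔞 h0).map d
  rw [← LinearMap.range_eq_map, ← LinearMap.range_comp, hd1.linearMap_comp_eq_zero,
    range_zero] at h2
  exact h1.trans h2

lemma mem_zero_coker (T : SerreClass R) (h0 : FinCoker 𝔞 f 0) (h : FinKer 𝔞 f 1)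
    (hK : T.fgBy.mem (ExtQuot 𝔞 2 (ker f))) : T.fgBy.mem (ExtQuot 𝔞 0 (B ⧸ range f)) := by
  obtain ⟨-, hd⟩ := exists_delta 𝔞 (injective_subtype (ker f)) f.surjective_rangeRestrict
    (exact_subtype_rangeRestrict f)
  obtain ⟨d, hd1, hd2⟩ := hd 1
  obtain ⟨-, hd'⟩ := exists_delta 𝔞 (injective_subtype (range f)) (mkQ_surjective _)
    (exact_subtype_mkQ _)
  obtain ⟨d', hd'1, hd'2⟩ := hd' 0
  have h1 : (ker d').FG := by
    rw [hd'1.linearMap_ker_eq]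
    have := h0.map (map 𝔞 0 (range f).mkQ)
    rw [← LinearMap.range_eq_map, ← LinearMap.range_comp, ← map_comp, range_mkQ_comp, map_zero,
      range_zero] at this
    exact this.fg
  have h2 : (ker (d ∘ₗ d')).FG := by
    have : (range d' ⊓ ker d).FG := by
      rw [← hd'2.linearMap_ker_eq, hd1.linearMap_ker_eq]
      refine fg_of_le_fg (h.map (map 𝔞 1 f.rangeRestrict)) ?_
      rintro _ ⟨hα, α, rfl⟩
      refine ⟨α, ?_, rfl⟩
      rw [SetLike.mem_coe, LinearMap.mem_ker] at hα ⊢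
      rwa [← map_subtype_rangeRestrict]
    have := (AlmostLE.of_fg this ⊥).comap d'
    rw [Submodule.comap_bot, comap_inf, LinearMap.range_eq_map d',
      comap_map_eq, top_sup_eq, top_inf_eq, ← LinearMap.ker_comp] at this
    exact (this.trans (.of_fg h1 ⊥)).fg
  have : Module.Finite R (ker (d ∘ₗ d')) := .of_fg h2
  exact T.fgBy.of_exact _ (d ∘ₗ d') (exact_subtype_ker_map _) (T.mem_fgBy_of_finite) hK

lemma finite_extQuot {X : Type u} [AddCommGroup X] [Module R X] [Module.Finite R X] (i : ℕ) :
    Module.Finite R (ExtQuot 𝔞 i X) :=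
  SerreClass.mem_fin_iff.1 (SerreClass.extQuot_mem _ 𝔞 (SerreClass.mem_fgBy_of_finite _) i)

lemma finKer_and_finCoker_of_finite [Module.Finite R (ker f)] [Module.Finite R (B ⧸ range f)]
    (i : ℕ) : FinKer 𝔞 f i ∧ FinCoker 𝔞 f i := by
  obtain ⟨hE, hd⟩ := exists_delta 𝔞 (injective_subtype (ker f)) f.surjective_rangeRestrict
    (exact_subtype_rangeRestrict f)
  obtain ⟨hE', hd'⟩ := exists_delta 𝔞 (injective_subtype (range f)) (mkQ_surjective _)
    (exact_subtype_mkQ _)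
  constructor
  · have h1 : (ker (map 𝔞 i (range f).subtype)).FG := by
      cases i with
      | zero =>
        rw [LinearMap.ker_eq_bot.2 (map_zero_injective 𝔞 (injective_subtype _))]
        exact fg_bot
      | succ i =>
        obtain ⟨d, hd1, hd2⟩ := hd' i
        rw [hd2.linearMap_ker_eq, LinearMap.range_eq_map d]
        exact (finite_extQuot 𝔞 (X := B ⧸ range f) i).fg_top.map d
    have h2 := (AlmostLE.of_fg h1 ⊥).comap (map 𝔞 i f.rangeRestrict)
    rw [Submodule.comap_bot, (hE i).linearMap_ker_eq, ← LinearMap.ker_comp,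
      map_subtype_rangeRestrict, LinearMap.range_eq_map (map 𝔞 i (ker f).subtype)] at h2
    exact (h2.trans (.of_fg ((finite_extQuot 𝔞 i).fg_top.map _) ⊥)).fg
  · have h1 := (AlmostLE.of_fg (finite_extQuot 𝔞 (X := B ⧸ range f) i).fg_top ⊥).comap
      (map 𝔞 i (range f).mkQ)
    rw [Submodule.comap_bot, (hE' i).linearMap_ker_eq, comap_top,
      LinearMap.range_eq_map (map 𝔞 i (range f).subtype)] at h1
    obtain ⟨d, hd1, hd2⟩ := hd i
    have h2 := ((AlmostLE.of_fg (finite_extQuot 𝔞 (X := ker f) (i + 1)).fg_top ⊥).comap d).map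
      (map 𝔞 i (range f).subtype)
    rw [Submodule.comap_bot, hd1.linearMap_ker_eq, comap_top, ← LinearMap.range_comp,
      map_subtype_rangeRestrict] at h2
    exact h1.trans h2

end ExtQuot
end

section
open Submodule

section Artinian

variable {A Y : Type*} [CommRing A] [AddCommGroup Y] [Module A Y]

lemma IsArtinian.exists_stable {K : Submodule A Y} [IsArtinian A K] (h : ℕ → Submodule A Y)
    (hh : Antitone h) (hK : ∀ n, h n ≤ K) : ∃ n, ∀ m, n ≤ m → h m = h n := by
  let f : ℕ →o (Submodule A K)ᵒᵈ := ⟨fun n ↦ OrderDual.toDual ((h n).comap K.subtype),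
    fun m n hmn ↦ comap_mono (hh hmn)⟩
  obtain ⟨n, hn⟩ := IsArtinian.monotone_stabilizes f
  refine ⟨n, fun m hm ↦ ?_⟩
  have : (h n).comap K.subtype = (h m).comap K.subtype := hn m hm
  rw [← inf_eq_right.2 (hK m), ← inf_eq_right.2 (hK n), ← map_comap_subtype, ← map_comap_subtype,
    this]

/-- The layers `x ^ j • (B ∩ (0 : x ^ (j + 1)))` of a submodule `B`. -/
def torsionLayer (x : A) (B : Submodule A Y) (j : ℕ) : Submodule A Y :=
  (B ⊓ torsionBy A Y (x ^ (j + 1))).map (DistribSMul.toLinearMap A Y (x ^ j))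

lemma mem_torsionLayer {x : A} {B : Submodule A Y} {j : ℕ} {y : Y} :
    y ∈ torsionLayer x B j ↔ ∃ b ∈ B, x ^ (j + 1) • b = 0 ∧ x ^ j • b = y := by
  simp [torsionLayer, and_assoc]

lemma torsionLayer_le (x : A) (B : Submodule A Y) (j : ℕ) :
    torsionLayer x B j ≤ torsionBy A Y x := by
  intro y hy
  obtain ⟨b, -, hb, rfl⟩ := mem_torsionLayer.1 hy
  rwa [mem_torsionBy_iff, ← mul_smul, ← pow_succ']

lemma torsionLayer_mono {x : A} {B C : Submodule A Y} (h : B ≤ C) {i j : ℕ} (hij : i ≤ j) :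
    torsionLayer x B j ≤ torsionLayer x C i := by
  intro y hy
  obtain ⟨b, hb, hb', rfl⟩ := mem_torsionLayer.1 hy
  obtain ⟨k, rfl⟩ := Nat.exists_eq_add_of_le hij
  refine mem_torsionLayer.2 ⟨x ^ k • b, C.smul_mem _ (h hb), ?_, ?_⟩
  · rw [← mul_smul, ← pow_add, ← hb']
    congr 2
    ring
  · rw [← mul_smul, ← pow_add]

lemma le_of_torsionLayer_le {x : A} (hx : ∀ y : Y, ∃ n : ℕ, x ^ n • y = 0) {B C : Submodule A Y}
    (hCB : C ≤ B) (h : ∀ j, torsionLayer x B j ≤ torsionLayer x C j) : B ≤ C := by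
  have key (n : ℕ) : ∀ b ∈ B, x ^ n • b = 0 → b ∈ C := by
    induction n with
    | zero =>
      intro b _ hb
      rw [pow_zero, one_smul] at hb
      exact hb ▸ C.zero_mem
    | succ n ih =>
      intro b hb hb'
      obtain ⟨c, hc, -, hc'⟩ := mem_torsionLayer.1 (h n (mem_torsionLayer.2 ⟨b, hb, hb', rfl⟩))
      have := ih (b - c) (B.sub_mem hb (hCB hc)) (by rw [smul_sub, hc', sub_self])
      simpa using C.add_mem this hc
  intro b hb
  obtain ⟨n, hn⟩ := hx b
  exact key n b hb hn

lemma isArtinian_of_torsionBy {x : A} (hx : ∀ y : Y, ∃ n : ℕ, x ^ n • y = 0)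
    [IsArtinian A (torsionBy A Y x)] : IsArtinian A Y := by
  refine monotone_stabilizes_iff_artinian.1 fun f ↦ ?_
  let B (n : ℕ) : Submodule A Y := OrderDual.ofDual (f n)
  have hB : Antitone B := fun m n h ↦ f.monotone h
  obtain ⟨n, hn⟩ := IsArtinian.exists_stable (fun n ↦ torsionLayer x (B n) n)
    (fun _ _ h ↦ torsionLayer_mono (hB h) h) (fun _ ↦ torsionLayer_le _ _ _)
  have hj (j : ℕ) := IsArtinian.exists_stable (fun n ↦ torsionLayer x (B n) j)
    (fun _ _ h ↦ torsionLayer_mono (hB h) le_rfl) (fun _ ↦ torsionLayer_le _ _ _)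
  choose N hN using hj
  let M := n + ∑ j ∈ Finset.range n, N j
  refine ⟨M, fun m hm ↦ ?_⟩
  refine le_antisymm (α := Submodule A Y) ?_ (hB hm)
  refine le_of_torsionLayer_le hx (hB hm) fun j ↦ ?_
  have hnM : n ≤ M := Nat.le_add_right _ _
  by_cases hjn : j < n
  · have hjM : N j ≤ M := (Finset.single_le_sum (fun _ _ ↦ Nat.zero_le _)
      (Finset.mem_range.2 hjn)).trans (Nat.le_add_left _ _)
    exact ((hN j M hjM).trans (hN j m (hjM.trans hm)).symm).le
  · push Not at hjn
    calc torsionLayer x (B M) j ≤ torsionLayer x (B n) n := torsionLayer_mono (hB hnM) hjn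
      _ = torsionLayer x (B (max j m)) (max j m) := (hn _ (hjn.trans (le_max_left _ _))).symm
      _ ≤ _ := torsionLayer_mono (hB (le_max_right _ _)) (le_max_left _ _)

lemma isArtinian_of_torsionBySet_finset (s : Finset A) :
    ∀ {Y : Type*} [AddCommGroup Y] [Module A Y], (∀ x ∈ s, ∀ y : Y, ∃ n : ℕ, x ^ n • y = 0) →
      IsArtinian A (torsionBySet A Y (s : Set A)) → IsArtinian A Y := by
  classical
  induction s using Finset.induction_on with
  | empty =>
    intro Y _ _ _ h
    let f : Y →ₗ[A] torsionBySet A Y ((∅ : Finset A) : Set A) :=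
      LinearMap.id.codRestrict _ fun y ↦ by simp [mem_torsionBySet_iff]
    exact isArtinian_of_injective f fun y z h ↦ Subtype.ext_iff.1 h
  | insert x s _ ih =>
    intro Y _ _ hs h
    have : IsArtinian A (torsionBy A Y x) := by
      refine ih (fun z hz y ↦ ?_) ?_
      · obtain ⟨n, hn⟩ := hs z (Finset.mem_insert_of_mem hz) y
        exact ⟨n, Subtype.ext hn⟩
      · let f : torsionBySet A (torsionBy A Y x) (s : Set A) →ₗ[A]
            torsionBySet A Y ((insert x s : Finset A) : Set A) :=
          LinearMap.codRestrict _ ((torsionBy A Y x).subtype ∘ₗ Submodule.subtype _) fun y ↦ by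
            rw [mem_torsionBySet_iff]
            rintro ⟨z, hz⟩
            rcases Finset.mem_insert.1 hz with rfl | hz
            · exact (mem_torsionBy_iff _ _).1 y.1.2
            · exact congrArg Subtype.val ((mem_torsionBySet_iff _ _).1 y.2 ⟨z, hz⟩)
        refine isArtinian_of_injective f fun y z h ↦ Subtype.ext (Subtype.ext ?_)
        have := congrArg Subtype.val h
        exact this
    exact isArtinian_of_torsionBy (hs x (Finset.mem_insert_self _ _))

lemma isArtinian_of_torsionBySet [IsNoetherianRing A] (I : Ideal A)
    (h : ∀ x ∈ I, ∀ y : Y, ∃ n : ℕ, x ^ n • y = 0)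
    [IsArtinian A (torsionBySet A Y (I : Set A))] : IsArtinian A Y := by
  obtain ⟨s, hs⟩ := IsNoetherian.noetherian I
  refine isArtinian_of_torsionBySet_finset s (fun x hx ↦ h x (hs ▸ subset_span hx)) ?_
  rwa [torsionBySet_eq_torsionBySet_span, Ideal.span, hs]

/-- A finitely generated module whose support consists of maximal ideals is Artinian. -/
lemma isArtinian_of_isMaximal [IsNoetherianRing A] [Module.Finite A Y]
    (h : ∀ P : Ideal A, P.IsPrime → Module.annihilator A Y ≤ P → P.IsMaximal) :
    IsArtinian A Y := by
  let J := Module.annihilator A Y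
  have : Ring.KrullDimLE 0 (A ⧸ J) := by
    refine Ring.krullDimLE_zero_iff.2 fun P hP ↦ ?_
    have := h (P.comap (Ideal.Quotient.mk J)) inferInstance (by
      refine fun x hx ↦ Ideal.mem_comap.2 ?_
      rw [Ideal.Quotient.eq_zero_iff_mem.2 hx]
      exact P.zero_mem)
    have hm := Ideal.map_eq_top_or_isMaximal_of_surjective (Ideal.Quotient.mk J)
      Ideal.Quotient.mk_surjective this
    rw [Ideal.map_comap_of_surjective _ Ideal.Quotient.mk_surjective] at hm
    exact hm.resolve_left hP.ne_top
  have : IsArtinianRing (A ⧸ J) := IsNoetherianRing.isArtinianRing_of_krullDimLE_zero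
  let _ : Module (A ⧸ J) Y := Module.quotientAnnihilator
  have : IsScalarTower A (A ⧸ J) Y := (Module.isTorsionBySet_annihilator A Y).isScalarTower
  have : Module.Finite (A ⧸ J) Y := Module.Finite.of_restrictScalars_finite A _ _
  have : IsArtinian (A ⧸ J) Y := isArtinian_of_fg_of_artinian'
  exact isArtinian_of_surjective_algebraMap (R := A ⧸ J) Ideal.Quotient.mk_surjective

end Artinian
end

section
open Submodule

section

variable {A Y : Type u} [CommRing A] [AddCommGroup Y] [Module A Y] [IsNoetherianRing A]

/-- If a power of `I` kills `Y`, then `Y` is in a given Serre class as soon as `0 : I` is. -/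
lemma SerreClass.mem_of_pow_le (S : SerreClass A) (I : Ideal A) (n : ℕ) :
    ∀ {Y : Type u} [AddCommGroup Y] [Module A Y], I ^ n ≤ Module.annihilator A Y →
      S.mem (torsionBySet A Y (I : Set A)) → S.mem Y := by
  induction n with
  | zero =>
    intro Y _ _ h _
    have : Subsingleton Y := Module.annihilator_eq_top_iff.1 (top_le_iff.1 (by simpa using h))
    exact S.of_subsingleton Y
  | succ n ih =>
    intro Y _ _ h hS
    obtain ⟨k, a, ha⟩ := Submodule.fg_iff_exists_fin_generating_family.1
      (IsNoetherian.noetherian I)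
    have haI (j : Fin k) : a j ∈ I := ha ▸ subset_span (Set.mem_range_self j)
    let IY : Submodule A Y := I • ⊤
    have hIY : S.mem IY := by
      refine ih (fun r hr ↦ Module.mem_annihilator.2 fun y ↦ Subtype.ext ?_) ?_
      · rw [coe_smul, coe_zero]
        obtain ⟨y, hy⟩ := y
        change r • y = 0
        refine smul_induction_on hy (fun s hs z _ ↦ ?_) fun y z hy hz ↦ ?_
        · rw [← mul_smul]
          refine Module.mem_annihilator.1 (h ?_) z
          rw [pow_succ]
          exact Ideal.mul_mem_mul hr hs
        · simp only [smul_add, hy, hz, add_zero]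
      · let f : torsionBySet A IY (I : Set A) →ₗ[A] torsionBySet A Y (I : Set A) :=
          LinearMap.codRestrict _ (IY.subtype ∘ₗ Submodule.subtype _) fun y ↦ by
            rw [mem_torsionBySet_iff]
            exact fun z ↦ congrArg Subtype.val ((mem_torsionBySet_iff _ _).1 y.2 z)
        exact S.of_injective f (fun y z h ↦ Subtype.ext (Subtype.ext (by
            have := congrArg Subtype.val h
            exact this))) hS
    let φ : Y →ₗ[A] (Fin k → IY) := LinearMap.pi fun j ↦
      (DistribSMul.toLinearMap A Y (a j)).codRestrict IY fun y ↦ smul_mem_smul (haI j) mem_top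
    refine S.of_exact _ φ (LinearMap.exact_subtype_ker_map φ) ?_ (S.pi hIY k)
    refine S.of_injective (inclusion (p' := torsionBySet A Y (I : Set A)) ?_)
      (inclusion_injective _) hS
    intro y hy
    rw [← ha]
    change y ∈ torsionBySet A Y (Ideal.span (Set.range a))
    rw [← torsionBySet_eq_torsionBySet_span, mem_torsionBySet_iff]
    rintro ⟨_, j, rfl⟩
    exact congrArg Subtype.val (congrFun (LinearMap.mem_ker.1 hy) j)

lemma Submodule.exists_finset_almostLE (I : Ideal A) [IsArtinian A Y]
    [Module.Finite A (torsionBySet A Y (I : Set A))] (W : Submodule A Y) :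
    ∃ Q : Finset (Ideal A), (∀ q ∈ Q, q.IsPrime ∧ ¬ I ≤ q) ∧ ∀ x ∈ I, (∀ q ∈ Q, x ∉ q) →
      AlmostLE W (W.map (DistribSMul.toLinearMap A Y x)) := by
  classical
  induction W using WellFoundedLT.induction with
  | ind W ih =>
  by_cases hsum : ∃ W₁ < W, ∃ W₂ < W, W ≤ W₁ ⊔ W₂
  · obtain ⟨W₁, h₁, W₂, h₂, h⟩ := hsum
    obtain ⟨Q₁, hQ₁, H₁⟩ := ih W₁ h₁
    obtain ⟨Q₂, hQ₂, H₂⟩ := ih W₂ h₂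
    refine ⟨Q₁ ∪ Q₂, fun q hq ↦ (Finset.mem_union.1 hq).elim (hQ₁ q) (hQ₂ q), fun x hx hxQ ↦ ?_⟩
    obtain ⟨F₁, hF₁, h₁'⟩ := H₁ x hx fun q hq ↦ hxQ q (Finset.mem_union_left _ hq)
    obtain ⟨F₂, hF₂, h₂'⟩ := H₂ x hx fun q hq ↦ hxQ q (Finset.mem_union_right _ hq)
    refine ⟨F₁ ⊔ F₂, hF₁.sup hF₂, h.trans (sup_le (h₁'.trans ?_) (h₂'.trans ?_))⟩
    · exact sup_le_sup (map_mono h₁.le) le_sup_left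
    · exact sup_le_sup (map_mono h₂.le) le_sup_right
  by_cases hW : W = ⊥
  · exact ⟨∅, by simp, fun x _ _ ↦ .of_le (by simp [hW])⟩
  have key (r : A) : W ≤ W.map (DistribSMul.toLinearMap A Y r) ∨ r ∈ W.annihilator.radical := by
    have hle (n : ℕ) : W.map (DistribSMul.toLinearMap A Y (r ^ n)) ≤ W := by
      rintro _ ⟨w, hw, rfl⟩
      exact W.smul_mem _ hw
    obtain ⟨n, hn⟩ := IsArtinian.exists_stable (K := (⊤ : Submodule A Y))
      (fun n ↦ W.map (DistribSMul.toLinearMap A Y (r ^ n))) (by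
        rintro m n hmn _ ⟨w, hw, rfl⟩
        obtain ⟨k, rfl⟩ := Nat.exists_eq_add_of_le hmn
        refine ⟨r ^ k • w, W.smul_mem _ hw, ?_⟩
        simp [← mul_smul, pow_add, mul_comm]) fun _ ↦ le_top
    rcases (hle n).eq_or_lt with h | h
    · left
      intro w hw
      rw [← h, ← hn (n + 1) n.le_succ] at hw
      obtain ⟨w, hw, rfl⟩ := hw
      exact ⟨r ^ n • w, W.smul_mem _ hw, by simp [← mul_smul, pow_succ, mul_comm]⟩
    · right
      have h' : W ⊓ torsionBy A Y (r ^ n) = W := by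
        by_contra hne
        refine hsum ⟨_, h, _, inf_le_left.lt_of_ne hne, fun w hw ↦ ?_⟩
        have : r ^ n • w ∈ W.map (DistribSMul.toLinearMap A Y (r ^ (n + n))) := by
          rw [hn _ (n.le_add_right n)]
          exact ⟨w, hw, rfl⟩
        obtain ⟨w', hw', e⟩ := this
        refine mem_sup.2 ⟨r ^ n • w', ⟨w', hw', rfl⟩, w - r ^ n • w',
          ⟨W.sub_mem hw (W.smul_mem _ hw'), ?_⟩, by simp⟩
        rw [SetLike.mem_coe, mem_torsionBy_iff, smul_sub, ← e, ← mul_smul, ← pow_add]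
        exact sub_self _
      refine Ideal.mem_radical_iff.2 ⟨n, mem_annihilator.2 fun w hw ↦ ?_⟩
      rw [← h'] at hw
      exact (mem_torsionBy_iff _ _).1 hw.2
  have hsurj (r : A) (h : W ≤ W.map (DistribSMul.toLinearMap A Y r)) :
      r ∉ W.annihilator.radical := by
    rw [Ideal.mem_radical_iff]
    rintro ⟨n, hn⟩
    induction n with
    | zero =>
      refine hW ((Submodule.eq_bot_iff _).2 fun w hw ↦ ?_)
      simpa using mem_annihilator.1 hn w hw
    | succ n ih =>
      refine ih (mem_annihilator.2 fun w hw ↦ ?_)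
      obtain ⟨w', hw', rfl⟩ := h hw
      simpa [← mul_smul, ← pow_succ] using mem_annihilator.1 hn w' hw'
  by_cases hI : I ≤ W.annihilator.radical
  · obtain ⟨n, hn⟩ := Ideal.exists_pow_le_of_le_radical_of_fg hI (IsNoetherian.noetherian I)
    refine ⟨∅, by simp, fun x _ _ ↦ .of_fg ?_ _⟩
    have : (SerreClass.fin A).mem W := by
      refine SerreClass.mem_of_pow_le _ I n hn ?_
      let f : torsionBySet A W (I : Set A) →ₗ[A] torsionBySet A Y (I : Set A) :=
        LinearMap.codRestrict _ (W.subtype ∘ₗ Submodule.subtype _) fun y ↦ by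
          rw [mem_torsionBySet_iff]
          exact fun z ↦ congrArg Subtype.val ((mem_torsionBySet_iff _ _).1 y.2 z)
      exact SerreClass.of_injective _ f
        (fun y z h ↦ Subtype.ext (Subtype.ext (by
            have := congrArg Subtype.val h
            exact this)))
        (SerreClass.mem_fgBy_of_finite _)
    exact Module.Finite.iff_fg.1 (SerreClass.mem_fin_iff.1 this)
  · refine ⟨{W.annihilator.radical}, ?_, fun x _ hxQ ↦
      .of_le ((key x).resolve_right (hxQ _ (by simp)))⟩
    simp only [Finset.mem_singleton, forall_eq]
    refine ⟨⟨fun h ↦ hI (h ▸ le_top), fun {r s} hrs ↦ ?_⟩, hI⟩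
    by_contra! h
    have hr := (key r).resolve_right h.1
    have hs := (key s).resolve_right h.2
    refine hsurj (r * s) (hr.trans ((map_mono hs).trans ?_)) hrs
    rintro _ ⟨_, ⟨w, hw, rfl⟩, rfl⟩
    exact ⟨w, hw, mul_smul _ _ _⟩

end
end

section
open Submodule

variable {R : Type u} [CommRing R] {X : Type u} [AddCommGroup X] [Module R X]

lemma Module.exists_pow_smul_eq_zero {𝔞 : Ideal R}
    (h : Module.support R X ⊆ PrimeSpectrum.zeroLocus (𝔞 : Set R)) {x : R} (hx : x ∈ 𝔞) (m : X) :
    ∃ n : ℕ, x ^ n • m = 0 := by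
  have : x ∈ (R ∙ m).annihilator.radical := by
    rw [Ideal.radical_eq_sInf, mem_sInf]
    rintro p ⟨hp, hp'⟩
    exact h (Module.mem_support_iff_exists_annihilator (p := ⟨p, hp'⟩).2 ⟨m, hp⟩) hx
  obtain ⟨n, hn⟩ := Ideal.mem_radical_iff.1 this
  exact ⟨n, (mem_annihilator_span_singleton _ _).1 hn⟩

/-- Two primes of `Z` disjoint from `S` are never strictly contained in each other. -/
def AntichainOff (S : Submonoid R) (Z : Set (PrimeSpectrum R)) : Prop :=
  ∀ p ∈ Z, ∀ q ∈ Z, p ≤ q → Disjoint (S : Set R) q.asIdeal → p = q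

variable (S : Submonoid R)

lemma comap_mem_support {Y : Type u} [AddCommGroup Y] [Module R Y]
    {A : Type u} [CommRing A] [Algebra R A] [Module A Y] [IsScalarTower R A Y]
    (f : X →ₗ[R] Y) [IsLocalizedModule S f] {P : PrimeSpectrum A}
    (hP : P ∈ Module.support A Y) : PrimeSpectrum.comap (algebraMap R A) P ∈ Module.support R X := by
  obtain ⟨y, hy⟩ := Module.mem_support_iff_exists_annihilator.1 hP
  obtain ⟨⟨m, s⟩, hs⟩ := IsLocalizedModule.surj S f y
  refine Module.mem_support_iff_exists_annihilator.2 ⟨m, fun r hr ↦ ?_⟩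
  refine hy ((mem_annihilator_span_singleton _ _).2 ?_)
  have h1 : r • m = 0 := (mem_annihilator_span_singleton _ _).1 hr
  have h2 : s • r • y = s • (0 : Y) := by
    rw [smul_comm, hs, ← map_smul, h1, map_zero, smul_zero]
  rw [algebraMap_smul]
  exact (IsLocalizedModule.smul_inj f s _ _).1 h2

lemma exists_smul_mem_of_mem_localized {Y : Type u} [AddCommGroup Y] [Module R Y]
    {A : Type u} [CommRing A] [Algebra R A] [Module A Y] [IsScalarTower R A Y]
    [IsLocalization S A] (f : X →ₗ[R] Y) [IsLocalizedModule S f] {N : Submodule R X} {m : X}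
    (hm : f m ∈ N.localized' A S f) : ∃ s ∈ S, s • m ∈ N := by
  obtain ⟨n, hn, s, e⟩ := (mem_localized' A S f N _).1 hm
  rw [IsLocalizedModule.mk'_eq_iff, Submonoid.smul_def, ← map_smul] at e
  obtain ⟨u, hu⟩ := IsLocalizedModule.exists_of_eq (S := S) e
  refine ⟨u * s, S.mul_mem u.2 s.2, ?_⟩
  rw [mul_smul]
  exact hu ▸ N.smul_mem u hn

section Localized

variable {S} {Z : Set (PrimeSpectrum R)} {𝔞 : Ideal R} [IsNoetherianRing R]
  {Y : Type u} [AddCommGroup Y] [Module R Y] {A : Type u} [CommRing A] [Algebra R A] [Module A Y]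
  [IsScalarTower R A Y]

variable (S) in
lemma finite_torsionBySet_map [IsLocalization S A] (f : X →ₗ[R] Y) [IsLocalizedModule S f]
    (h0 : (SerreClass.fgBy (.tors S)).mem (torsionBySet R X (𝔞 : Set R))) :
    Module.Finite A (torsionBySet A Y (𝔞.map (algebraMap R A) : Set A)) := by
  classical
  have : IsNoetherianRing A := IsLocalization.isNoetherianRing S A inferInstance
  obtain ⟨L, hL, hT⟩ := h0
  obtain ⟨s, hs⟩ := IsNoetherian.noetherian 𝔞
  refine Module.Finite.of_fg (fg_of_le_fg
    (localized'_fg A S f (hL.map (torsionBySet R X (𝔞 : Set R)).subtype)) fun y hy ↦ ?_)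
  obtain ⟨⟨m, t⟩, ht⟩ := IsLocalizedModule.surj S f y
  have hu (r : R) (hr : r ∈ 𝔞) : ∃ u ∈ S, u • r • m = 0 := by
    have : f (r • m) = f 0 := by
      rw [map_smul, map_zero, ← ht, smul_comm, ← algebraMap_smul A r y,
        (mem_torsionBySet_iff _ _).1 hy ⟨_, Ideal.mem_map_of_mem _ hr⟩, smul_zero]
    obtain ⟨u, hu⟩ := IsLocalizedModule.exists_of_eq (S := S) this
    exact ⟨u, u.2, by rwa [smul_zero] at hu⟩
  choose! u huS hu using hu
  let v := ∏ r ∈ s, u r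
  have hsa (r : R) (hr : r ∈ s) : r ∈ 𝔞 := hs ▸ subset_span hr
  have hv : v ∈ S := S.prod_mem fun r hr ↦ huS r (hsa r hr)
  have hvm : v • m ∈ torsionBySet R X (𝔞 : Set R) := by
    rw [← hs, ← Ideal.span, ← torsionBySet_eq_torsionBySet_span, mem_torsionBySet_iff]
    rintro ⟨r, hr⟩
    obtain ⟨c, hc⟩ := Finset.dvd_prod_of_mem u hr
    change r • v • m = 0
    change v = _ at hc
    rw [smul_comm, hc, mul_comm, mul_smul, hu r (hsa r hr), smul_zero]
  obtain ⟨w, hw, hw'⟩ := hT (L.mkQ ⟨v • m, hvm⟩)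
  rw [← map_smul, mkQ_apply, Submodule.Quotient.mk_eq_zero] at hw'
  refine (mem_localized' A S f _ _).2 ⟨w • v • m, ⟨_, hw', rfl⟩,
    ⟨w * v, S.mul_mem hw hv⟩ * t, ?_⟩
  rw [IsLocalizedModule.mk'_eq_iff, mul_smul, ht, ← mul_smul, map_smul]
  rfl

variable (S) in
lemma isArtinian_of_antichainOff [IsLocalization S A] (f : X →ₗ[R] Y) [IsLocalizedModule S f]
    (hZ : AntichainOff S Z) (hX : Module.support R X ⊆ Z)
    (hX' : Module.support R X ⊆ PrimeSpectrum.zeroLocus (𝔞 : Set R))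
    [Module.Finite A (torsionBySet A Y (𝔞.map (algebraMap R A) : Set A))] : IsArtinian A Y := by
  have : IsNoetherianRing A := IsLocalization.isNoetherianRing S A inferInstance
  have hsub : Module.support A (torsionBySet A Y (𝔞.map (algebraMap R A) : Set A)) ⊆
      Module.support A Y := Module.support_subset_of_injective _ (injective_subtype _)
  have hart : IsArtinian A (torsionBySet A Y (𝔞.map (algebraMap R A) : Set A)) := by
    refine isArtinian_of_isMaximal fun P hP hPann ↦ ?_
    have hmem (P : PrimeSpectrum A)
        (h : Module.annihilator A (torsionBySet A Y (𝔞.map (algebraMap R A) : Set A)) ≤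
          P.asIdeal) : PrimeSpectrum.comap (algebraMap R A) P ∈ Z := by
      refine hX (comap_mem_support S f (hsub ?_))
      rw [Module.support_eq_zeroLocus]
      exact h
    obtain ⟨P', hP', hle⟩ := Ideal.exists_le_maximal P hP.ne_top
    have := hZ _ (hmem ⟨P, hP⟩ hPann) _ (hmem ⟨P', hP'.isPrime⟩ (hPann.trans hle))
      (Ideal.comap_mono hle) ((IsLocalization.isPrime_iff_isPrime_disjoint S A P').1 hP'.isPrime).2
    have := congrArg PrimeSpectrum.asIdeal
      (PrimeSpectrum.localization_comap_injective A S this)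
    change P = P' at this
    exact this ▸ hP'
  have hY : Module.support A Y ⊆ PrimeSpectrum.zeroLocus (𝔞.map (algebraMap R A) : Set A) :=
    fun P hP ↦ Ideal.map_le_iff_le_comap.2 (hX' (comap_mem_support S f hP))
  exact isArtinian_of_torsionBySet (𝔞.map (algebraMap R A)) fun x hx y ↦
    Module.exists_pow_smul_eq_zero hY hx y

lemma quotient_range_mem_fgBy [IsLocalization S A] (f : X →ₗ[R] Y) [IsLocalizedModule S f]
    {x : R}
    (h : AlmostLE (⊤ : Submodule A Y)
      ((⊤ : Submodule A Y).map (DistribSMul.toLinearMap A Y (algebraMap R A x)))) :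
    (SerreClass.fgBy (.tors S)).mem (X ⧸ LinearMap.range (x • LinearMap.id : X →ₗ[R] X)) := by
  classical
  obtain ⟨F, ⟨s, hs⟩, hF⟩ := h
  choose g hg using fun y : Y ↦ IsLocalizedModule.surj S f y
  let L : Submodule R X := span R (s.image fun y ↦ (g y).1)
  have hFL : F ≤ L.localized' A S f := by
    rw [← hs, span_le]
    intro y hy
    refine (mem_localized' A S f _ _).2 ⟨(g y).1, subset_span ?_, (g y).2, ?_⟩
    · exact Finset.mem_coe.2 (Finset.mem_image_of_mem _ hy)
    · rw [IsLocalizedModule.mk'_eq_iff, hg]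
  let xX := LinearMap.range (x • LinearMap.id : X →ₗ[R] X)
  refine ⟨L.map xX.mkQ, .map _ ⟨_, rfl⟩, fun m ↦ ?_⟩
  obtain ⟨m, rfl⟩ := mkQ_surjective _ m
  obtain ⟨m, rfl⟩ := mkQ_surjective _ m
  have hm : f m ∈ (xX ⊔ L).localized' A S f := by
    refine (sup_le ?_ (hFL.trans ?_) : _ ≤ (xX ⊔ L).localized' A S f) (hF mem_top)
    · rintro _ ⟨y, -, rfl⟩
      obtain ⟨⟨n, t⟩, ht⟩ := IsLocalizedModule.surj S f y
      refine (mem_localized' A S f _ _).2 ⟨x • n, mem_sup_left ⟨n, rfl⟩, t, ?_⟩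
      rw [IsLocalizedModule.mk'_eq_iff, map_smul]
      change x • f n = t • (algebraMap R A x) • y
      rw [← ht, algebraMap_smul, smul_comm]
    · rintro y hy
      obtain ⟨n, hn, t, e⟩ := (mem_localized' A S f _ _).1 hy
      exact (mem_localized' A S f _ _).2 ⟨n, mem_sup_right hn, t, e⟩
  obtain ⟨t, ht, htm⟩ := exists_smul_mem_of_mem_localized S f hm
  refine ⟨t, ht, ?_⟩
  rw [← map_smul, ← map_smul, mkQ_apply, Submodule.Quotient.mk_eq_zero]
  obtain ⟨a, ha, b, hb, e⟩ := mem_sup.1 htm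
  refine ⟨b, hb, ?_⟩
  rw [← e, map_add, show xX.mkQ a = 0 from (Submodule.Quotient.mk_eq_zero xX).2 ha, zero_add]

lemma exists_finset_primes_mem_of_isLocalization (A : Type u) [CommRing A] [Algebra R A] [Module A Y]
    [IsScalarTower R A Y]
    [IsLocalization S A] (f : X →ₗ[R] Y) [IsLocalizedModule S f]
    (hZ : AntichainOff S Z) (hX : Module.support R X ⊆ Z)
    (hX' : Module.support R X ⊆ PrimeSpectrum.zeroLocus (𝔞 : Set R))
    (h0 : (SerreClass.fgBy (.tors S)).mem (torsionBySet R X (𝔞 : Set R))) :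
    ∃ Q : Finset (Ideal R), (∀ q ∈ Q, q.IsPrime ∧ ¬ 𝔞 ≤ q) ∧ ∀ x ∈ 𝔞, (∀ q ∈ Q, x ∉ q) →
      (SerreClass.fgBy (.tors S)).mem (X ⧸ LinearMap.range (x • LinearMap.id : X →ₗ[R] X)) := by
  classical
  have : IsNoetherianRing A := IsLocalization.isNoetherianRing S A inferInstance
  have := finite_torsionBySet_map (A := A) S f h0
  have := isArtinian_of_antichainOff (A := A) S f hZ hX hX'
  obtain ⟨Q, hQ, H⟩ := exists_finset_almostLE (Y := Y) (𝔞.map (algebraMap R A)) ⊤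
  refine ⟨Q.image (Ideal.comap (algebraMap R A)), fun q hq ↦ ?_, fun x hx hxQ ↦ ?_⟩
  · obtain ⟨q, hqQ, rfl⟩ := Finset.mem_image.1 hq
    have := (hQ q hqQ).1
    exact ⟨inferInstance, fun h ↦ (hQ q hqQ).2 (Ideal.map_le_iff_le_comap.2 h)⟩
  · exact quotient_range_mem_fgBy f (H _ (Ideal.mem_map_of_mem _ hx) fun q hq hxq ↦
      hxQ _ (Finset.mem_image_of_mem _ hq) hxq)

end Localized

lemma exists_finset_primes_mem [IsNoetherianRing R] {S : Submonoid R} {Z : Set (PrimeSpectrum R)}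
    {𝔞 : Ideal R} (hZ : AntichainOff S Z) (hX : Module.support R X ⊆ Z)
    (hX' : Module.support R X ⊆ PrimeSpectrum.zeroLocus (𝔞 : Set R))
    (h0 : (SerreClass.fgBy (.tors S)).mem (torsionBySet R X (𝔞 : Set R))) :
    ∃ Q : Finset (Ideal R), (∀ q ∈ Q, q.IsPrime ∧ ¬ 𝔞 ≤ q) ∧ ∀ x ∈ 𝔞, (∀ q ∈ Q, x ∉ q) →
      (SerreClass.fgBy (.tors S)).mem (X ⧸ LinearMap.range (x • LinearMap.id : X →ₗ[R] X)) :=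
  exists_finset_primes_mem_of_isLocalization (Localization S) (LocalizedModule.mkLinearMap S X) hZ hX hX' h0

end

section
open Submodule LinearMap

namespace SerreClass

open ExtQuot

variable {R : Type u} [CommRing R] (S : SerreClass R) (𝔞 : Ideal R)
  {X Y Z : Type u} [AddCommGroup X] [Module R X] [AddCommGroup Y] [Module R Y]
  [AddCommGroup Z] [Module R Z]

lemma mem_extQuot_zero_of_injective {f : X →ₗ[R] Y} (hf : Function.Injective f)
    (h : S.mem (ExtQuot 𝔞 0 Y)) : S.mem (ExtQuot 𝔞 0 X) :=
  S.of_injective _ (map_zero_injective 𝔞 hf) h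

section Exact

variable {f : X →ₗ[R] Y} {g : Y →ₗ[R] Z} (hf : Function.Injective f)
  (hg : Function.Surjective g) (h : Function.Exact f g)
include hf hg h

lemma mem_extQuot_of_exact₁ (i : ℕ) (hZ : S.mem (ExtQuot 𝔞 i Z))
    (hY : S.mem (ExtQuot 𝔞 (i + 1) Y)) : S.mem (ExtQuot 𝔞 (i + 1) X) := by
  obtain ⟨d, -, hd⟩ := (exists_delta 𝔞 hf hg h).2 i
  exact S.of_exact _ _ hd hZ hY

lemma mem_extQuot_of_exact₂ (i : ℕ) (hX : S.mem (ExtQuot 𝔞 i X))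
    (hZ : S.mem (ExtQuot 𝔞 i Z)) : S.mem (ExtQuot 𝔞 i Y) :=
  S.of_exact _ _ ((exists_delta 𝔞 hf hg h).1 i) hX hZ

lemma mem_extQuot_of_exact₃ (i : ℕ) (hY : S.mem (ExtQuot 𝔞 i Y))
    (hX : S.mem (ExtQuot 𝔞 (i + 1) X)) : S.mem (ExtQuot 𝔞 i Z) := by
  obtain ⟨d, hd, -⟩ := (exists_delta 𝔞 hf hg h).2 i
  exact S.of_exact _ _ hd hY hX

end Exact

lemma mem_extQuot_one_ker (f : X →ₗ[R] Y) (h0 : S.mem (ExtQuot 𝔞 0 Y))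
    (h1 : S.mem (ExtQuot 𝔞 1 X)) : S.mem (ExtQuot 𝔞 1 (ker f)) :=
  S.mem_extQuot_of_exact₁ 𝔞 (injective_subtype _) f.surjective_rangeRestrict
    (exact_subtype_rangeRestrict f) 0
    (S.mem_extQuot_zero_of_injective 𝔞 (injective_subtype (range f)) h0) h1

lemma mem_extQuot_zero_coker (f : X →ₗ[R] Y) (h0 : S.mem (ExtQuot 𝔞 0 Y))
    (h1 : S.mem (ExtQuot 𝔞 1 X)) (hK : S.mem (ExtQuot 𝔞 2 (ker f))) :
    S.mem (ExtQuot 𝔞 0 (Y ⧸ range f)) :=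
  S.mem_extQuot_of_exact₃ 𝔞 (injective_subtype _) (mkQ_surjective _) (exact_subtype_mkQ _) 0 h0 <|
    S.mem_extQuot_of_exact₃ 𝔞 (injective_subtype _) f.surjective_rangeRestrict
      (exact_subtype_rangeRestrict f) 1 h1 hK

/-- If multiplication by some `x ∈ 𝔞` on `X` has kernel and cokernel with `Ext` modules in a Serre
class, then so does `X`. -/
lemma mem_extQuot_of_smul {x : R} (hx : x ∈ 𝔞)
    (hK : ∀ i, S.mem (ExtQuot 𝔞 i (ker (x • LinearMap.id : X →ₗ[R] X))))
    (hN : ∀ i, S.mem (ExtQuot 𝔞 i (X ⧸ range (x • LinearMap.id : X →ₗ[R] X)))) (i : ℕ) :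
    S.mem (ExtQuot 𝔞 i X) := by
  set f : X →ₗ[R] X := x • LinearMap.id
  have hE := exists_delta 𝔞 (injective_subtype (ker f)) f.surjective_rangeRestrict
    (exact_subtype_rangeRestrict f)
  have hE' := exists_delta 𝔞 (injective_subtype (range f)) (mkQ_surjective _) (exact_subtype_mkQ _)
  have hk : S.mem (ker (map 𝔞 i (range f).subtype)) := by
    cases i with
    | zero =>
      rw [LinearMap.ker_eq_bot.2 (map_zero_injective 𝔞 (injective_subtype _))]
      exact S.of_subsingleton _
    | succ i =>
      obtain ⟨d, -, hd⟩ := hE'.2 i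
      rw [hd.linearMap_ker_eq]
      exact S.of_surjective _ d.surjective_rangeRestrict (hN i)
  have h0 : map 𝔞 i (range f).subtype ∘ₗ map 𝔞 i f.rangeRestrict = 0 := by
    rw [map_subtype_rangeRestrict, map_smul_eq_zero 𝔞 i _ hx]
  let p : ExtQuot 𝔞 i X →ₗ[R] ker (map 𝔞 i (range f).subtype) :=
    (map 𝔞 i f.rangeRestrict).codRestrict _ fun α ↦ LinearMap.congr_fun h0 α
  refine S.of_exact (map 𝔞 i (ker f).subtype) p (fun α ↦ ?_) (hK i) hk
  rw [← hE.1 i α]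
  exact Subtype.ext_iff

end SerreClass

lemma Ideal.exists_mem_forall_notMem {R : Type*} [CommRing R] {𝔞 𝔟 : Ideal R} (h : ¬ 𝔞 ≤ 𝔟)
    (Q : Finset (Ideal R)) (hQ : ∀ q ∈ Q, q.IsPrime ∧ ¬ 𝔞 ≤ q) :
    ∃ x ∈ 𝔞, x ∉ 𝔟 ∧ ∀ q ∈ Q, x ∉ q := by
  classical
  have := (Ideal.subset_union_prime (s := insert 𝔟 Q) (f := id) (I := 𝔞) 𝔟 𝔟
    (fun q hq hqb _ ↦ (hQ q (Finset.mem_of_mem_insert_of_ne hq hqb)).1)).not.2 (by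
      rintro ⟨q, hq, hle⟩
      rcases Finset.mem_insert.1 hq with rfl | hq
      · exact h hle
      · exact (hQ q hq).2 hle)
  obtain ⟨x, hx, hx'⟩ := Set.not_subset.1 this
  simp only [Set.mem_iUnion, not_exists] at hx'
  exact ⟨x, hx, hx' 𝔟 (Finset.mem_insert_self ..),
    fun q hq ↦ hx' q (Finset.mem_insert_of_mem hq)⟩

lemma SerreClass.mem_extQuot_of_good {R : Type u} [CommRing R] [IsNoetherianRing R]
    (S : SerreClass R) {𝔞 : Ideal R} (c : Prop) {M : Submonoid R} {Z : Set (PrimeSpectrum R)}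
    (hZ : AntichainOff M Z) (hZa : Z ⊆ PrimeSpectrum.zeroLocus (𝔞 : Set R))
    (hS : ∀ (X : Type u) [AddCommGroup X] [Module R X], S.mem X → (fgBy (tors M)).mem X)
    (hgood : ∀ (Y : Type u) [AddCommGroup Y] [Module R Y], Module.support R Y ⊆ Z →
      (fgBy (tors M)).mem Y → (c → S.mem (ExtQuot 𝔞 0 Y)) → ∀ i, S.mem (ExtQuot 𝔞 i Y))
    {X : Type u} [AddCommGroup X] [Module R X] (hX : Module.support R X ⊆ Z)
    (h0 : S.mem (ExtQuot 𝔞 0 X)) (h1 : c → S.mem (ExtQuot 𝔞 1 X)) (i : ℕ) :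
    S.mem (ExtQuot 𝔞 i X) := by
  suffices H : ∀ (b : Ideal R) (X : Type u) [AddCommGroup X] [Module R X],
      b ≤ Module.annihilator R X → Module.support R X ⊆ Z → S.mem (ExtQuot 𝔞 0 X) →
      (c → S.mem (ExtQuot 𝔞 1 X)) → ∀ i, S.mem (ExtQuot 𝔞 i X) from
    H ⊥ X bot_le hX h0 h1 i
  intro b
  induction b using WellFoundedGT.induction with
  | ind b ih =>
  intro X _ _ hb hX h0 h1
  by_cases hab : 𝔞 ≤ b
  · refine fun i ↦ S.extQuot_mem 𝔞 (S.mem_of_pow_le 𝔞 1 ?_ (S.of_equiv (ExtQuot.zeroEquiv 𝔞) h0)) i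
    rw [pow_one]
    exact hab.trans hb
  obtain ⟨Q, hQ, H⟩ := exists_finset_primes_mem hZ hX (hX.trans hZa)
    (hS _ (S.of_equiv (ExtQuot.zeroEquiv 𝔞) h0))
  obtain ⟨x, hx, hxb, hxQ⟩ := Ideal.exists_mem_forall_notMem hab Q hQ
  have hN := H x hx hxQ
  have hK : ∀ i, S.mem (ExtQuot 𝔞 i (ker (x • LinearMap.id : X →ₗ[R] X))) := by
    refine ih (b ⊔ Ideal.span {x}) ?_ _ ?_
      ((Module.support_subset_of_injective _ (injective_subtype _)).trans hX)
      (S.mem_extQuot_zero_of_injective 𝔞 (injective_subtype _) h0)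
      fun hc ↦ S.mem_extQuot_one_ker 𝔞 _ h0 (h1 hc)
    · refine lt_of_le_not_ge le_sup_left fun h ↦ hxb (h (mem_sup_right ?_))
      exact Ideal.mem_span_singleton_self x
    · refine sup_le (hb.trans (LinearMap.annihilator_le_of_injective _ (injective_subtype _)))
        ((Ideal.span_singleton_le_iff_mem _).2 (Module.mem_annihilator.2 fun y ↦ ?_))
      exact Subtype.ext y.2
  refine S.mem_extQuot_of_smul 𝔞 hx hK (hgood _
    ((Module.support_subset_of_surjective _ (mkQ_surjective _)).trans hX) hN fun hc ↦ ?_)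
  exact S.mem_extQuot_zero_coker 𝔞 _ h0 (h1 hc) (hK 2)

end

section
open Submodule LinearMap

variable {R : Type u} [CommRing R] [IsNoetherianRing R] {𝔞 : Ideal R}
  {X Y : Type u} [AddCommGroup X] [Module R X] [AddCommGroup Y] [Module R Y]

lemma Module.exists_pow_le_annihilator_span
    (h : Module.support R X ⊆ PrimeSpectrum.zeroLocus (𝔞 : Set R)) (m : X) :
    ∃ n : ℕ, 𝔞 ^ n ≤ Module.annihilator R (R ∙ m) :=
  Ideal.exists_pow_le_of_le_radical_of_fg (fun x hx ↦ by
    obtain ⟨n, hn⟩ := Module.exists_pow_smul_eq_zero h hx m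
    exact ⟨n, (mem_annihilator_span_singleton _ _).2 hn⟩) (IsNoetherian.noetherian 𝔞)

namespace SerreClass

lemma mem_span_of_torsionBySet (S : SerreClass R)
    (h : Module.support R X ⊆ PrimeSpectrum.zeroLocus (𝔞 : Set R))
    (h0 : S.mem (torsionBySet R X (𝔞 : Set R))) (m : X) : S.mem (R ∙ m) := by
  obtain ⟨n, hn⟩ := Module.exists_pow_le_annihilator_span h m
  refine S.mem_of_pow_le 𝔞 n hn (S.of_injective
    (((R ∙ m).subtype ∘ₗ (torsionBySet R (R ∙ m) (𝔞 : Set R)).subtype).codRestrict _ fun y ↦ ?_)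
    (fun y z hyz ↦ ?_) h0)
  · refine (mem_torsionBySet_iff _ _).2 fun a ↦ ?_
    exact congrArg Subtype.val ((mem_torsionBySet_iff _ _).1 y.2 a)
  · have : (y : R ∙ m).1 = (z : R ∙ m).1 := congrArg (fun w : torsionBySet R X (𝔞 : Set R) ↦ w.1) hyz
    exact Subtype.ext (Subtype.ext this)

lemma tors_mem_of_torsionBySet {M : Submonoid R}
    (h : Module.support R X ⊆ PrimeSpectrum.zeroLocus (𝔞 : Set R))
    (h0 : (tors M).mem (torsionBySet R X (𝔞 : Set R))) : (tors M).mem X := fun m ↦ by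
  obtain ⟨s, hs, h⟩ := mem_span_of_torsionBySet (tors M) h h0 m ⟨m, mem_span_singleton_self m⟩
  exact ⟨s, hs, congrArg Subtype.val h⟩

lemma powTors_mem_of_fgBy {M : Submonoid R} (h : (fgBy (powTors M)).mem X) (hX : (tors M).mem X) :
    (powTors M).mem X := by
  classical
  obtain ⟨L, ⟨F, rfl⟩, h⟩ := h
  refine (powTors M).of_quotient _ ?_ h
  choose s hs hsx using hX
  refine ⟨∏ y ∈ F, s y, M.prod_mem fun y _ ↦ hs y, fun x ↦ ⟨1, ?_⟩⟩
  rw [pow_one]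
  refine Module.mem_annihilator.1 ((mem_annihilator_span (F : Set X) _).2 fun y ↦ ?_) x
  obtain ⟨c, hc⟩ := Finset.dvd_prod_of_mem s y.2
  rw [hc, mul_comm, mul_smul, hsx, smul_zero]

lemma powTors_mem_of_torsionBySet {M : Submonoid R}
    (h : Module.support R X ⊆ PrimeSpectrum.zeroLocus (𝔞 : Set R))
    (h0 : (powTors M).mem (torsionBySet R X (𝔞 : Set R))) : (powTors M).mem X := by
  obtain ⟨s, hs, h0⟩ := h0
  refine ⟨s, hs, fun x ↦ ?_⟩
  obtain ⟨_, ⟨n, rfl⟩, hx⟩ := tors_mem_of_torsionBySet (M := Submonoid.powers s) h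
    (fun y ↦ let ⟨n, hn⟩ := h0 y; ⟨s ^ n, ⟨n, rfl⟩, hn⟩) x
  exact ⟨n, hx⟩

omit [IsNoetherianRing R] in
lemma not_disjoint_of_mem_support {M : Submonoid R} (h : (tors M).mem X) {p : PrimeSpectrum R}
    (hp : p ∈ Module.support R X) : ¬ Disjoint (M : Set R) p.asIdeal := by
  obtain ⟨x, hx⟩ := Module.mem_support_iff_exists_annihilator.1 hp
  obtain ⟨s, hs, hsx⟩ := h x
  exact Set.not_disjoint_iff.2 ⟨s, hs, hx ((mem_annihilator_span_singleton _ _).2 hsx)⟩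

variable (T : SerreClass R)

lemma mem_extQuot_zero_quotient {L : Submodule R X} (hL : L.FG)
    (h : T.fgBy.mem (ExtQuot 𝔞 0 X)) : T.fgBy.mem (ExtQuot 𝔞 0 (X ⧸ L)) :=
  have : Module.Finite R L := .of_fg hL
  have := ExtQuot.finite_extQuot 𝔞 (X := L) 1
  T.fgBy.mem_extQuot_of_exact₃ 𝔞 (injective_subtype _) (mkQ_surjective _) (exact_subtype_mkQ _) 0 h
    T.mem_fgBy_of_finite

lemma mem_extQuot_of_quotient {L : Submodule R X} (hL : L.FG) (i : ℕ)
    (h : T.fgBy.mem (ExtQuot 𝔞 i (X ⧸ L))) : T.fgBy.mem (ExtQuot 𝔞 i X) :=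
  have : Module.Finite R L := .of_fg hL
  have := ExtQuot.finite_extQuot 𝔞 (X := L) i
  T.fgBy.mem_extQuot_of_exact₂ 𝔞 (injective_subtype _) (mkQ_surjective _) (exact_subtype_mkQ _) i
    T.mem_fgBy_of_finite h

variable {M : Submonoid R} {Z : Set (PrimeSpectrum R)} (hZ : AntichainOff M Z)
  (hZa : Z ⊆ PrimeSpectrum.zeroLocus (𝔞 : Set R))
include hZ hZa

lemma mem_extQuot_tors (hX : Module.support R X ⊆ Z)
    (h0 : (fgBy (tors M)).mem (ExtQuot 𝔞 0 X)) (i : ℕ) : (fgBy (tors M)).mem (ExtQuot 𝔞 i X) :=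
  mem_extQuot_of_good (fgBy (tors M)) False hZ hZa (fun _ ↦ id)
    (fun _ _ _ _ h _ ↦ extQuot_mem _ 𝔞 h) hX h0 False.elim i

lemma mem_extQuot_powTors (hX : Module.support R X ⊆ Z)
    (h0 : (fgBy (powTors M)).mem (ExtQuot 𝔞 0 X)) (h1 : (fgBy (powTors M)).mem (ExtQuot 𝔞 1 X))
    (i : ℕ) : (fgBy (powTors M)).mem (ExtQuot 𝔞 i X) := by
  refine mem_extQuot_of_good (fgBy (powTors M)) True hZ hZa (fun X _ _ ↦ mem_fgBy_of_imp ?_)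
    (fun Y _ _ hY hYM h ↦ ?_) hX h0 (fun _ ↦ h1) i
  · rintro X _ _ ⟨s, hs, h⟩ x
    obtain ⟨n, hn⟩ := h x
    exact ⟨s ^ n, M.pow_mem hs n, hn⟩
  · obtain ⟨L, hL, hT⟩ := hYM
    have hQ := of_equiv _ (ExtQuot.zeroEquiv 𝔞)
      (mem_extQuot_zero_quotient (powTors M) hL (h trivial))
    refine extQuot_mem _ 𝔞 ⟨L, hL, powTors_mem_of_torsionBySet (𝔞 := 𝔞) ?_ (powTors_mem_of_fgBy hQ
      ((tors M).of_injective _ (injective_subtype _) hT))⟩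
    exact ((Module.support_subset_of_surjective _ (mkQ_surjective _)).trans hY).trans hZa

lemma mem_extQuot_tors_of_le {M' : Submonoid R} (hM : M' ≤ M)
    (hZ' : AntichainOff M' {p ∈ Z | ¬ Disjoint (M : Set R) p.asIdeal})
    (hX : Module.support R X ⊆ Z)
    (h0 : (fgBy (tors M')).mem (ExtQuot 𝔞 0 X)) (h1 : (fgBy (tors M')).mem (ExtQuot 𝔞 1 X))
    (i : ℕ) : (fgBy (tors M')).mem (ExtQuot 𝔞 i X) := by
  refine mem_extQuot_of_good (fgBy (tors M')) True hZ hZa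
    (fun X _ _ ↦ mem_fgBy_of_imp fun X _ _ h x ↦ ?_)
    (fun Y _ _ hY hYM h i ↦ ?_) hX h0 (fun _ ↦ h1) i
  · obtain ⟨s, hs, hx⟩ := h x
    exact ⟨s, hM hs, hx⟩
  · obtain ⟨L, hL, hT⟩ := hYM
    refine mem_extQuot_of_quotient (tors M') hL i (mem_extQuot_tors hZ'
      ((Set.sep_subset _ _).trans hZa) (fun p hp ↦ ⟨?_, ?_⟩)
      (mem_extQuot_zero_quotient (tors M') hL (h trivial)) i)
    · exact hY (Module.support_subset_of_surjective _ (mkQ_surjective _) hp)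
    · exact not_disjoint_of_mem_support hT hp

end SerreClass
end

section

variable {R : Type u} [CommRing R]

/-- The elements of `R` lying in none of the primes of `T`. -/
def offPrimes (T : Set (PrimeSpectrum R)) : Submonoid R := ⨅ p ∈ T, p.asIdeal.primeCompl

lemma mem_offPrimes {T : Set (PrimeSpectrum R)} {x : R} :
    x ∈ offPrimes T ↔ ∀ p ∈ T, x ∉ p.asIdeal := by
  simp [offPrimes, Submonoid.mem_iInf, Ideal.mem_primeCompl_iff]

lemma offPrimes_anti {T T' : Set (PrimeSpectrum R)} (h : T ⊆ T') : offPrimes T' ≤ offPrimes T :=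
  fun _ hx ↦ mem_offPrimes.2 fun p hp ↦ mem_offPrimes.1 hx p (h hp)

lemma disjoint_offPrimes {T : Set (PrimeSpectrum R)} {p : PrimeSpectrum R} (hp : p ∈ T) :
    Disjoint (offPrimes T : Set R) p.asIdeal :=
  Set.disjoint_left.2 fun _ hx ↦ mem_offPrimes.1 hx p hp

lemma exists_le_of_disjoint_offPrimes {T : Set (PrimeSpectrum R)} (hT : T.Finite)
    {p : PrimeSpectrum R} (hp : Disjoint (offPrimes T : Set R) p.asIdeal) : ∃ t ∈ T, p ≤ t := by
  refine (Ideal.subset_union_prime_finite hT (f := PrimeSpectrum.asIdeal) p p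
    fun t _ _ _ ↦ t.2).1 fun x hx ↦ ?_
  by_contra h
  simp only [Set.mem_iUnion, not_exists] at h
  exact Set.disjoint_left.1 hp (mem_offPrimes.2 h) hx

/-- The primes containing `J` which start a chain of primes of length two. -/
def lowPrimes (J : Ideal R) : Set (PrimeSpectrum R) :=
  {p | J ≤ p.asIdeal ∧ ∃ q r, p < q ∧ q < r}

/-- The nonmaximal primes containing `J` and `s` which do not start a chain of length two. -/
def midPrimes (J : Ideal R) (s : R) : Set (PrimeSpectrum R) :=
  {p | J ≤ p.asIdeal ∧ s ∈ p.asIdeal ∧ p ∉ lowPrimes J ∧ ∃ q, p < q}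

lemma finite_of_forall_minimal [IsNoetherianRing R] {T : Set (PrimeSpectrum R)} (I : Ideal R)
    (hT : ∀ t ∈ T, I ≤ t.asIdeal) (h : ∀ t ∈ T, ∀ p : PrimeSpectrum R, I ≤ p.asIdeal → ¬ p < t) :
    T.Finite := by
  refine Set.Finite.of_finite_image (f := PrimeSpectrum.asIdeal)
    (I.finite_minimalPrimes_of_isNoetherianRing.subset ?_)
    fun _ _ _ _ h ↦ PrimeSpectrum.ext h
  rintro _ ⟨t, ht, rfl⟩
  refine ⟨⟨t.2, hT t ht⟩, fun p hp hpt ↦ ?_⟩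
  by_contra hne
  exact h t ht ⟨p, hp.1⟩ hp.2 (lt_of_le_not_ge hpt hne)

variable {J : Ideal R} (hJ : ∀ p q r w : PrimeSpectrum R, J ≤ p.asIdeal → p < q → q < r → ¬ r < w)
include hJ

lemma not_lt_of_mem_lowPrimes {p t : PrimeSpectrum R} (ht : t ∈ lowPrimes J)
    (hp : J ≤ p.asIdeal) : ¬ p < t := fun h ↦
  let ⟨_, q, r, hq, hr⟩ := ht
  hJ p t q r hp h hq hr

lemma antichainOff_lowPrimes (hfin : (lowPrimes J).Finite) :
    AntichainOff (offPrimes (lowPrimes J)) {p | J ≤ p.asIdeal} := by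
  intro p hp q hq hpq hd
  obtain ⟨t, ht, hqt⟩ := exists_le_of_disjoint_offPrimes hfin hd
  by_contra hne
  exact not_lt_of_mem_lowPrimes hJ ht hp ((lt_of_le_of_ne hpq hne).trans_le hqt)

lemma antichainOff_midPrimes {s : R} (hfin : (lowPrimes J).Finite) (hfin' : (midPrimes J s).Finite) :
    AntichainOff (offPrimes (lowPrimes J ∪ midPrimes J s))
      {p ∈ {p : PrimeSpectrum R | J ≤ p.asIdeal} |
        ¬ Disjoint (offPrimes (lowPrimes J) : Set R) p.asIdeal} := by
  rintro p ⟨hp, hpd⟩ q - hpq hd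
  obtain ⟨t, ht, hqt⟩ := exists_le_of_disjoint_offPrimes (hfin.union hfin') hd
  by_contra hne
  have hlt := (lt_of_le_of_ne hpq hne).trans_le hqt
  rcases ht with ht | ht
  · exact not_lt_of_mem_lowPrimes hJ ht hp hlt
  · obtain ⟨-, -, -, r, hr⟩ := ht
    exact hpd (disjoint_offPrimes ⟨hp, t, r, hlt, hr⟩)

variable [IsNoetherianRing R]

lemma finite_lowPrimes : (lowPrimes J).Finite :=
  finite_of_forall_minimal J (fun _ ht ↦ ht.1) fun _ ht _ hp ↦ not_lt_of_mem_lowPrimes hJ ht hp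

omit hJ in
lemma finite_midPrimes {s : R} (hs : s ∈ offPrimes (lowPrimes J)) : (midPrimes J s).Finite := by
  refine finite_of_forall_minimal (J ⊔ Ideal.span {s})
    (fun t ht ↦ sup_le ht.1 ((Ideal.span_singleton_le_iff_mem _).2 ht.2.1)) ?_
  rintro t ⟨-, -, -, r, hr⟩ p hp hpt
  exact mem_offPrimes.1 hs p ⟨le_sup_left.trans hp, t, r, hpt, hr⟩
    (hp (Submodule.mem_sup_right (Ideal.mem_span_singleton_self s)))

end

section
open Submodule LinearMap SerreClass

variable {R : Type u} [CommRing R] [IsNoetherianRing R] {𝔞 J : Ideal R}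
  (hJ : ∀ p q r w : PrimeSpectrum R, J ≤ p.asIdeal → p < q → q < r → ¬ r < w)
  (ha : {p : PrimeSpectrum R | J ≤ p.asIdeal} ⊆ PrimeSpectrum.zeroLocus (𝔞 : Set R))
include ha

lemma mem_fin_extQuot_of_powers {X : Type u} [AddCommGroup X] [Module R X]
    (hX : Module.support R X ⊆ {p | J ≤ p.asIdeal}) {s : R}
    (hs : (tors (Submonoid.powers s)).mem X)
    (hX' : (fgBy (tors (offPrimes (lowPrimes J ∪ midPrimes J s)))).mem X)
    (h0 : (fin R).mem (ExtQuot 𝔞 0 X)) (i : ℕ) : (fin R).mem (ExtQuot 𝔞 i X) := by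
  obtain ⟨L, hL, hT⟩ := hX'
  have hXL := (tors (Submonoid.powers s)).of_surjective _ L.mkQ_surjective hs
  have hsupp := Module.support_subset_of_surjective _ L.mkQ_surjective
  refine mem_extQuot_of_quotient _ hL i (mem_extQuot_tors (Z := Module.support R (X ⧸ L)) ?_
    ((hsupp.trans hX).trans ha) subset_rfl (mem_extQuot_zero_quotient _ hL h0) i)
  intro p hp q _ hpq _
  by_contra hne
  have hlt := lt_of_le_of_ne hpq hne
  have hpT : p ∉ lowPrimes J ∪ midPrimes J s := fun h ↦
    not_disjoint_of_mem_support hT hp (disjoint_offPrimes h)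
  refine hpT (Or.inr ⟨hX (hsupp hp), ?_, fun h ↦ hpT (Or.inl h), q, hlt⟩)
  obtain ⟨_, ⟨n, rfl⟩, hn⟩ := Set.not_disjoint_iff.1 (not_disjoint_of_mem_support hXL hp)
  exact p.2.mem_of_pow_mem n hn

include hJ

lemma exists_finset_primes_extQuot {K N : Type u} [AddCommGroup K] [Module R K] [AddCommGroup N]
    [Module R N] (hK : Module.support R K ⊆ {p | J ≤ p.asIdeal})
    (hN : Module.support R N ⊆ {p | J ≤ p.asIdeal})
    (hN' : (fgBy (tors (offPrimes (lowPrimes J)))).mem N)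
    (h0 : (fin R).mem (ExtQuot 𝔞 0 K)) (h1 : (fin R).mem (ExtQuot 𝔞 1 K))
    (h2 : ∀ T : SerreClass R, T.fgBy.mem (ExtQuot 𝔞 2 K) → T.fgBy.mem (ExtQuot 𝔞 0 N)) :
    ∃ Q : Finset (Ideal R), (∀ q ∈ Q, q.IsPrime ∧ ¬ 𝔞 ≤ q) ∧ ∀ x ∈ 𝔞, (∀ q ∈ Q, x ∉ q) →
      (fgBy (tors (offPrimes (lowPrimes J)))).mem (K ⧸ range (x • LinearMap.id : K →ₗ[R] K)) ∧
      ∀ (W : Type u) [AddCommGroup W] [Module R W] (π : N →ₗ[R] W), Function.Surjective π →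
        (∀ w : W, x • w = 0) → (fin R).mem (ExtQuot 𝔞 0 W) → ∀ i, (fin R).mem (ExtQuot 𝔞 i W) := by
  classical
  have hfin := finite_lowPrimes hJ
  have hZ := antichainOff_lowPrimes hJ hfin
  set M := offPrimes (lowPrimes J)
  have hE := of_equiv _ (ExtQuot.zeroEquiv 𝔞) (h2 _ (mem_extQuot_powTors hZ ha hK
    (mem_fgBy_of_fin _ h0) (mem_fgBy_of_fin _ h1) 2))
  obtain ⟨L, hL, hT⟩ := hN'
  have hNL := Module.support_subset_of_surjective _ L.mkQ_surjective
  have hE' := of_equiv _ (ExtQuot.zeroEquiv 𝔞) (mem_extQuot_zero_quotient (powTors M) hL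
    (of_equiv _ (ExtQuot.zeroEquiv 𝔞).symm hE))
  obtain ⟨s, hs, hsx⟩ := powTors_mem_of_torsionBySet ((hNL.trans hN).trans ha)
    (powTors_mem_of_fgBy hE' ((tors M).of_injective _ (injective_subtype _) hT))
  have hfin' := finite_midPrimes hs
  have hZ' := antichainOff_midPrimes hJ hfin hfin'
  set M' := offPrimes (lowPrimes J ∪ midPrimes J s) with hM'
  have hle : M' ≤ M := offPrimes_anti Set.subset_union_left
  have hE₁ := mem_extQuot_zero_quotient (tors M') hL (h2 _ (mem_extQuot_tors_of_le hZ ha hle hZ' hK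
    (mem_fgBy_of_fin _ h0) (mem_fgBy_of_fin _ h1) 2))
  obtain ⟨Q₁, hQ₁, H₁⟩ := exists_finset_primes_mem hZ hK (hK.trans ha)
    (of_equiv _ (ExtQuot.zeroEquiv 𝔞) (mem_fgBy_of_fin _ h0))
  obtain ⟨Q₂, hQ₂, H₂⟩ := exists_finset_primes_mem hZ'
    (fun p hp ↦ ⟨hN (hNL hp), not_disjoint_of_mem_support hT hp⟩)
    ((hNL.trans hN).trans ha) (of_equiv _ (ExtQuot.zeroEquiv 𝔞) hE₁)
  refine ⟨Q₁ ∪ Q₂, fun q hq ↦ (Finset.mem_union.1 hq).elim (hQ₁ q) (hQ₂ q), fun x hx hxQ ↦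
    ⟨H₁ x hx fun q hq ↦ hxQ q (Finset.mem_union_left _ hq), fun W _ _ π hπ hxW hW i ↦ ?_⟩⟩
  have hNx := H₂ x hx fun q hq ↦ hxQ q (Finset.mem_union_right _ hq)
  refine mem_extQuot_of_quotient _ (hL.map π) i ?_
  let φ : N ⧸ L →ₗ[R] W ⧸ L.map π := L.mapQ _ π (le_comap_map π L)
  have hφ : Function.Surjective φ := by
    intro w
    obtain ⟨w, rfl⟩ := mkQ_surjective _ w
    obtain ⟨n, rfl⟩ := hπ w
    exact ⟨L.mkQ n, rfl⟩
  have hφx : range (x • LinearMap.id : N ⧸ L →ₗ[R] N ⧸ L) ≤ ker φ := by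
    rintro _ ⟨n, rfl⟩
    rw [LinearMap.mem_ker, LinearMap.smul_apply, map_smul]
    obtain ⟨w, hw⟩ := mkQ_surjective _ (φ n)
    rw [LinearMap.id_apply, ← hw, ← map_smul, hxW, _root_.map_zero]
  refine mem_fin_extQuot_of_powers ha (s := s)
    ((Module.support_subset_of_surjective _ hφ).trans (hNL.trans hN))
    ((tors _).of_surjective φ hφ fun n ↦ ?_)
    ((fgBy _).of_surjective ((range (x • LinearMap.id : N ⧸ L →ₗ[R] N ⧸ L)).liftQ φ hφx) ?_ hNx) (mem_extQuot_zero_quotient _ (hL.map π) hW)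
    i
  · obtain ⟨k, hk⟩ := hsx n
    exact ⟨s ^ k, ⟨k, rfl⟩, hk⟩
  · exact fun w ↦ let ⟨n, hn⟩ := hφ w; ⟨mkQ _ n, hn⟩

end

section
open Submodule LinearMap SerreClass

namespace ExtQuot

section

variable {R : Type u} [CommRing R] {A B : Type u} [AddCommGroup A] [Module R A] [AddCommGroup B]
  [Module R B] (f : A →ₗ[R] B) (x : R)

lemma smul_mem_range_toPull (z : ker (mixed f x)) : x • z ∈ range (toPull f x) :=
  ⟨z.1.1, Subtype.ext (Prod.ext rfl ((mem_ker_mixed f x).1 z.2))⟩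

lemma ker_toPull_le : ker (toPull f x) ≤ ker f := fun _ ha ↦
  congrArg (pullSnd f x) (LinearMap.mem_ker.1 ha)

lemma smul_eq_zero_of_mem_ker_toPull (a : ker (toPull f x)) : x • a = 0 :=
  Subtype.ext (congrArg (pullFst f x) (LinearMap.mem_ker.1 a.2))

/-- The map `k ↦ (k, 0)` on cokernels. -/
def kerToCoker : (ker f ⧸ range (x • LinearMap.id : ker f →ₗ[R] ker f)) →ₗ[R]
    (ker (mixed f x) ⧸ range (toPull f x)) :=
  (range (x • LinearMap.id : ker f →ₗ[R] ker f)).liftQ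
    ((range (toPull f x)).mkQ ∘ₗ (LinearMap.inl R A B ∘ₗ (ker f).subtype).codRestrict _ fun k ↦ by
      rw [mem_ker_mixed]
      exact (LinearMap.mem_ker.1 k.2).trans (smul_zero x).symm) (by
    rintro _ ⟨k, rfl⟩
    rw [LinearMap.mem_ker, LinearMap.comp_apply, mkQ_apply, Submodule.Quotient.mk_eq_zero]
    exact ⟨k, Subtype.ext (Prod.ext rfl k.2)⟩)

/-- The map `(a, b) ↦ b` on cokernels. -/
def cokerToCoker : (ker (mixed f x) ⧸ range (toPull f x)) →ₗ[R] (B ⧸ range f) :=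
  (range (toPull f x)).mapQ (range f) (pullSnd f x) (by
    rintro _ ⟨a, rfl⟩
    exact ⟨a, rfl⟩)

lemma exact_kerToCoker : Function.Exact (kerToCoker f x) (cokerToCoker f x) := by
  intro z
  obtain ⟨z, rfl⟩ := mkQ_surjective _ z
  constructor
  · intro h
    obtain ⟨a, ha⟩ := (Submodule.Quotient.mk_eq_zero (range f)).1 h
    have hz : f (z.1.1 - x • a) = 0 := by
      rw [map_sub, _root_.map_smul, (mem_ker_mixed f x).1 z.2, ha]
      exact sub_self _
    refine ⟨mkQ _ ⟨z.1.1 - x • a, hz⟩, (Submodule.Quotient.eq _).2 ⟨-a, Subtype.ext ?_⟩⟩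
    refine Prod.ext ?_ ?_
    · change x • -a = z.1.1 - x • a - z.1.1
      rw [smul_neg]
      abel
    · change f (-a) = 0 - z.1.2
      rw [map_neg, ha, zero_sub]
      rfl
  · rintro ⟨k, hk⟩
    obtain ⟨k, rfl⟩ := mkQ_surjective _ k
    rw [← hk]
    exact _root_.map_zero (range f).mkQ

end

variable {R : Type u} [CommRing R] [IsNoetherianRing R] {𝔞 J : Ideal R}

/-- If the map induced by `f` on `Ext^i_R(R/𝔞, -)` has finitely generated kernel for `i ≤ 2` and
finitely generated cokernel for `i ≤ 1`, then both are finitely generated for all `i`. -/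
theorem finKer_and_finCoker
    (hJ : ∀ p q r w : PrimeSpectrum R, J ≤ p.asIdeal → p < q → q < r → ¬ r < w)
    (ha : {p : PrimeSpectrum R | J ≤ p.asIdeal} ⊆ PrimeSpectrum.zeroLocus (𝔞 : Set R))
    (b : Ideal R) {A B : Type u} [AddCommGroup A] [Module R A] [AddCommGroup B] [Module R B]
    (f : A →ₗ[R] B) (hK : Module.support R (ker f) ⊆ {p | J ≤ p.asIdeal})
    (hN : Module.support R (B ⧸ range f) ⊆ {p | J ≤ p.asIdeal})
    (hN' : (fgBy (tors (offPrimes (lowPrimes J)))).mem (B ⧸ range f))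
    (hbK : b ≤ (Module.annihilator R (ker f)).radical)
    (hbN : b ≤ (Module.annihilator R (B ⧸ range f)).radical)
    (k0 : FinKer 𝔞 f 0) (k1 : FinKer 𝔞 f 1) (k2 : FinKer 𝔞 f 2)
    (c0 : FinCoker 𝔞 f 0) (c1 : FinCoker 𝔞 f 1) (i : ℕ) : FinKer 𝔞 f i ∧ FinCoker 𝔞 f i := by
  induction b using WellFoundedGT.induction generalizing A B i with
  | ind b ih =>
  have h0 : (fin R).mem (ExtQuot 𝔞 0 (ker f)) := mem_fin_iff.2 (finite_zero_ker 𝔞 k0)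
  have h1 : (fin R).mem (ExtQuot 𝔞 1 (ker f)) := mem_fin_iff.2 (finite_one_ker 𝔞 c0 k1)
  by_cases hab : 𝔞 ≤ b
  · have mem (X : Type u) [AddCommGroup X] [Module R X]
        (hX : b ≤ (Module.annihilator R X).radical) (h : (fin R).mem (ExtQuot 𝔞 0 X)) :
        Module.Finite R X := by
      obtain ⟨n, hn⟩ := Ideal.exists_pow_le_of_le_radical_of_fg (hab.trans hX)
        (IsNoetherian.noetherian 𝔞)
      exact mem_fin_iff.1 ((fin R).mem_of_pow_le 𝔞 n hn (of_equiv _ (zeroEquiv 𝔞) h))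
    have := mem _ hbK h0
    have := mem _ hbN (mem_zero_coker 𝔞 _ c0 k1 (mem_fin_iff.2 (finite_extQuot 𝔞 2)))
    exact finKer_and_finCoker_of_finite 𝔞 i
  obtain ⟨Q, hQ, H⟩ := exists_finset_primes_extQuot hJ ha hK hN hN' h0 h1
    fun T ↦ mem_zero_coker 𝔞 T c0 k1
  obtain ⟨x, hx, hxb, hxQ⟩ := Ideal.exists_mem_forall_notMem hab Q hQ
  obtain ⟨hKx, HW⟩ := H x hx hxQ
  have hinc := inclusion_injective (ker_toPull_le f x)
  have hlt : b < b ⊔ Ideal.span {x} := lt_of_le_not_ge le_sup_left fun h ↦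
    hxb (h (mem_sup_right (Ideal.mem_span_singleton_self x)))
  have hg : ∀ i, FinKer 𝔞 (toPull f x) i ∧ FinCoker 𝔞 (toPull f x) i := by
    refine ih _ hlt (toPull f x) ((Module.support_subset_of_injective _ hinc).trans hK)
      ((supp {p : PrimeSpectrum R | J ≤ p.asIdeal}).of_exact _ _ (exact_kerToCoker f x)
        ((Module.support_subset_of_surjective _ (mkQ_surjective _)).trans hK) hN)
      (of_exact _ _ _ (exact_kerToCoker f x) hKx hN')
      (sup_le (hbK.trans (Ideal.radical_mono (LinearMap.annihilator_le_of_injective _ hinc)))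
        ((Ideal.span_singleton_le_iff_mem _).2 (Ideal.le_radical (Module.mem_annihilator.2
          (smul_eq_zero_of_mem_ker_toPull f x)))))
      (sup_le (fun r hr ↦ ?_)
        ((Ideal.span_singleton_le_iff_mem _).2 (Ideal.le_radical (Module.mem_annihilator.2 ?_))))
      (k0.toPull 𝔞) (k1.toPull 𝔞) (k2.toPull 𝔞) (c0.toPull_zero 𝔞 hx k0) (c0.toPull_one 𝔞 hx k1 c1)
    · obtain ⟨n, hn⟩ := hbK hr
      obtain ⟨m, hm⟩ := hbN hr
      refine ⟨n + m, Module.mem_annihilator.2 fun z ↦ ?_⟩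
      obtain ⟨k, hk⟩ := (exact_kerToCoker f x (r ^ m • z)).1 (by
        rw [_root_.map_smul, Module.mem_annihilator.1 hm])
      obtain ⟨k, rfl⟩ := mkQ_surjective _ k
      rw [pow_add, mul_smul, ← hk, ← _root_.map_smul, ← _root_.map_smul, Module.mem_annihilator.1 hn, _root_.map_zero,
        _root_.map_zero]
    · intro z
      obtain ⟨z, rfl⟩ := mkQ_surjective _ z
      rw [← _root_.map_smul]
      exact (Submodule.Quotient.mk_eq_zero _).2 (smul_mem_range_toPull f x z)
  refine finKer_and_finCoker_of_toPull 𝔞 hx (fun i ↦ mem_fin_iff.1 (HW _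
    (factor (range_le_range_mixed (f := f) (x := x))) (factor_surjective _) (fun w ↦ ?_)
    (mem_fin_iff.2 (finite_zero_quotient 𝔞 hx c0 k1 c1 k2 (hg 2).2)) i)) hg i
  obtain ⟨w, rfl⟩ := mkQ_surjective _ w
  rw [← _root_.map_smul]
  exact (Submodule.Quotient.mk_eq_zero _).2 ⟨(0, -w), by rw [mixed_apply]; simp⟩

end ExtQuot

/-- A module supported on `V(J)`, where `V(J)` has no chains of length three, has finitely generated
`Ext^i_R(R/𝔞, -)` for all `i` as soon as this holds for `i ≤ 2`. -/
theorem finite_extQuot_of_le_two {R : Type u} [CommRing R] [IsNoetherianRing R] {𝔞 J : Ideal R}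
    (hJ : ∀ p q r w : PrimeSpectrum R, J ≤ p.asIdeal → p < q → q < r → ¬ r < w)
    (ha : {p : PrimeSpectrum R | J ≤ p.asIdeal} ⊆ PrimeSpectrum.zeroLocus (𝔞 : Set R))
    {X : Type u} [AddCommGroup X] [Module R X] (hX : Module.support R X ⊆ {p | J ≤ p.asIdeal})
    (h : ∀ i ≤ 2, Module.Finite R (ExtQuot 𝔞 i X)) (i : ℕ) : Module.Finite R (ExtQuot 𝔞 i X) := by
  let f : X →ₗ[R] PUnit.{u + 1} := 0
  have hker (i : ℕ) : ker (ExtQuot.map 𝔞 i f) = ⊤ := by rw [ExtQuot.map_zero, ker_zero]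
  have hk (i : ℕ) (hi : i ≤ 2) : ExtQuot.FinKer 𝔞 f i := by
    rw [ExtQuot.FinKer, hker]
    exact (h i hi).fg_top
  have hc (i : ℕ) : ExtQuot.FinCoker 𝔞 f i :=
    .of_fg (ExtQuot.finite_extQuot 𝔞 (X := PUnit.{u + 1}) i).fg_top _
  have hN : Subsingleton (PUnit.{u + 1} ⧸ range f) := inferInstance
  have := (ExtQuot.finKer_and_finCoker hJ ha ⊥ f
    ((Module.support_subset_of_injective _ (injective_subtype _)).trans hX)
    ((supp _).of_subsingleton _) (of_subsingleton _ _) bot_le bot_le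
    (hk 0 (by lia)) (hk 1 (by lia)) (hk 2 le_rfl) (hc 0) (hc 1) i).1
  rw [ExtQuot.FinKer, hker] at this
  exact ⟨this⟩

/-- If `X` is supported on `V(𝔞)` then its support is that of the submodule killed by `𝔞`. -/
lemma Module.support_eq_zeroLocus_torsionBySet {R : Type u} [CommRing R] [IsNoetherianRing R]
    {𝔞 : Ideal R} {X : Type u} [AddCommGroup X] [Module R X]
    (hX : Module.support R X ⊆ PrimeSpectrum.zeroLocus (𝔞 : Set R))
    [Module.Finite R (torsionBySet R X (𝔞 : Set R))] : Module.support R X =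
      {p | Module.annihilator R (torsionBySet R X (𝔞 : Set R)) ≤ p.asIdeal} := by
  have : Module.support R (torsionBySet R X (𝔞 : Set R)) =
      {p | Module.annihilator R (torsionBySet R X (𝔞 : Set R)) ≤ p.asIdeal} :=
    Module.support_eq_zeroLocus
  rw [← this]
  refine subset_antisymm (fun p hp ↦ ?_)
    (Module.support_subset_of_injective _ (injective_subtype _))
  obtain ⟨m, hm⟩ := Module.mem_support_iff_exists_annihilator.1 hp
  refine mem_span_of_torsionBySet (supp _) hX
    (show (supp (Module.support R (torsionBySet R X (𝔞 : Set R)))).mem _ from subset_rfl) m ?_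
  rw [Module.support_eq_zeroLocus]
  exact hm

end

/-- Yang–Shen, Lemma 2.1: for an `R`-module `M` with `dim_R M ≤ 2`, `M` is `𝔞`-cofinite if and
only if `Supp_R M ⊆ V(𝔞)` and `Ext^i_R(R/𝔞, M)` is finitely generated for `i = 0, 1, 2`. -/
theorem isCofinite_iff_of_moduleDim_le_two
    {R : Type u} [CommRing R] [IsNoetherianRing R] (𝔞 : Ideal R)
    (M : ModuleCat.{u} R) (hM : moduleDim R M ≤ 2) :
    IsCofinite 𝔞 M ↔
      (Module.support R M ⊆ PrimeSpectrum.zeroLocus (𝔞 : Set R) ∧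
        ∀ i : ℕ, i ≤ 2 → Module.Finite R (extIdeal 𝔞 i M)) := by
  refine ⟨fun h ↦ ⟨h.1, fun i _ ↦ h.2 i⟩, fun ⟨hX, h⟩ ↦ ⟨hX, fun i ↦ ?_⟩⟩
  have e (i : ℕ) : Nonempty (extIdeal 𝔞 i M ≃ₗ[R] ExtQuot 𝔞 i M) :=
    nonempty_ext_linearEquiv (ModuleCat.of R (R ⧸ 𝔞)) M i
  have hfin : ∀ i ≤ 2, Module.Finite R (ExtQuot 𝔞 i M) := fun i hi ↦
    have := h i hi
    Module.Finite.equiv (e i).some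
  have := hfin 0 (by simp)
  have : Module.Finite R (Submodule.torsionBySet R M (𝔞 : Set R)) :=
    Module.Finite.equiv (ExtQuot.zeroEquiv 𝔞)
  have hJ := Module.support_eq_zeroLocus_torsionBySet hX
  have := finite_extQuot_of_le_two (𝔞 := 𝔞) (X := M)
    (J := Module.annihilator R (Submodule.torsionBySet R M (𝔞 : Set R)))
    (fun p q r w hp hpq hqr hrw ↦ ?_) (hJ ▸ hX) hJ.le hfin i
  · exact Module.Finite.equiv (e i).some.symm
  · have hmem : ∀ z, p ≤ z → z ∈ Module.support R M := fun z hz ↦ by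
      rw [hJ]
      exact hp.trans hz
    let a : LTSeries (Module.support R M) :=
      { length := 3
        toFun := ![⟨p, hmem p le_rfl⟩, ⟨q, hmem q hpq.le⟩, ⟨r, hmem r (hpq.trans hqr).le⟩,
          ⟨w, hmem w (hpq.trans (hqr.trans hrw)).le⟩]
        step := fun j ↦ by
          fin_cases j
          exacts [hpq, hqr, hrw] }
    have h3 : ((3 : ℕ) : WithBot ℕ∞) ≤ (2 : ℕ) := (Order.LTSeries.length_le_krullDim a).trans hM
    exact absurd (Nat.cast_le.1 h3) (by simp)
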